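/- arXiv:2005.03183 — 3 statements merged into one kernel-verified Lean document; each statement's English description precedes it below -/
import Mathlib

section
/- Let m be a positive integer and q a prime power with 2m dividing q+1. Then the canonical additive character ψ of F_{q⁴} satisfies ψ(C_0^{(2m,q⁴)}) = (q²−1)/(2m) − q², and ψ(C_i^{(2m,q⁴)}) = (q²−1)/(2m) for all i with 1 ≤ i ≤ 2m−1. -/
open scoped Classical

noncomputable section

/-- The canonical additive character of a finite field `F` of characteristic `p`:
`ψ(x) = exp(2πi · Tr_{F/F_p}(x) / p)`. -/
def canChar (p : ℕ) (F : Type*) [Field F] [Fintype F] [Algebra (ZMod p) F] (x : F) : ℂ :=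
  Complex.exp (2 * Real.pi * Complex.I * ((Algebra.trace (ZMod p) F x).val : ℂ) / p)

/-- The cyclotomic class `C_i^{(N,q)} = ω^i ⟨ω^N⟩`. -/
def cycl {F : Type*} [Field F] [Fintype F] (ω : F) (N i : ℕ) : Finset F :=
  Finset.univ.filter fun x => ∃ k : ℕ, x = ω ^ (i + N * k)


/-!
The idea is to evaluate the Weil sums `S(a) = ∑ₓ ψ(a x ^ (q + 1))` over the field with `q ^ (4s)`
elements. Expanding `S(a) S(-a)` and shifting one variable gives `|F|` whenever the additive map
`x ↦ a ^ q x ^ (q ^ 2) + a x` is injective, which is the case when `a` is not a `(q + 1)`-th power.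
As `-1` is a `(q + 1)`-th power, `S(-a) = S(a)`, so that `S(a) = ± q ^ (2s)`. On the other hand,
`S(ω ^ c) = 1 + (q + 1) ψ(C_c)` for the class `C_c` of order `q + 1`, and `ψ(C_c)` is an algebraic
integer, so reduction modulo `q + 1` selects the sign `+`. This gives `ψ(C_c)` for `0 < c ≤ q`;
`ψ(C_0)` follows because the sum over all nonzero elements is `-1`. A class whose order `N` divides
`q + 1` is a union of `(q + 1) / N` classes of order `q + 1`.
-/

section CyclotomicClasses

theorem card_sub_one_pos (F : Type*) [Fintype F] [Nontrivial F] : 0 < Fintype.card F - 1 :=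
  Nat.sub_pos_of_lt Fintype.one_lt_card

variable {F : Type*} [Field F] [Fintype F] {ω : F}

theorem isPrimitiveRoot_card_sub_one_of_forall_exists_pow (hF : 2 < Fintype.card F)
    (hω : ∀ x : F, x ≠ 0 → ∃ k : ℕ, x = ω ^ k) :
    IsPrimitiveRoot ω (Fintype.card F - 1) := by
  have hω0 : ω ≠ 0 := by
    rintro rfl
    obtain ⟨x, -, hx⟩ := Finset.exists_mem_notMem_of_card_lt_card
      (s := {0, 1}) (t := (Finset.univ : Finset F)) (Finset.card_le_two.trans_lt hF)
    simp only [Finset.mem_insert, Finset.mem_singleton, not_or] at hx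
    obtain ⟨k, hk⟩ := hω x hx.1
    rcases eq_or_ne k 0 with rfl | hk0
    · exact hx.2 (by rw [hk, pow_zero])
    · exact hx.1 (by rw [hk, zero_pow hk0])
  have hgen : ∀ u : Fˣ, u ∈ Subgroup.zpowers (Units.mk0 ω hω0) := fun u ↦ by
    obtain ⟨k, hk⟩ := hω u u.ne_zero
    exact ⟨k, Units.ext (by simp [hk])⟩
  rw [← Fintype.card_units, ← Nat.card_eq_fintype_card,
    ← orderOf_eq_card_of_forall_mem_zpowers hgen]
  exact IsPrimitiveRoot.coe_units_iff.2 (IsPrimitiveRoot.orderOf (Units.mk0 ω hω0))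

theorem pow_pow_eq_one_iff_dvd {M : Type*} [CommMonoid M] {ζ : M} {d e : ℕ}
    (hζ : IsPrimitiveRoot ζ (d * e)) (he : 0 < e) (k : ℕ) : (ζ ^ k) ^ e = 1 ↔ d ∣ k := by
  rw [← pow_mul, hζ.pow_eq_one_iff_dvd, Nat.mul_dvd_mul_iff_right he]

theorem exists_eq_pow_of_ne_zero (hω : IsPrimitiveRoot ω (Fintype.card F - 1)) {x : F}
    (hx : x ≠ 0) : ∃ k : ℕ, x = ω ^ k := by
  have : NeZero (Fintype.card F - 1) := ⟨(card_sub_one_pos F).ne'⟩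
  obtain ⟨k, -, hk⟩ := hω.eq_pow_of_pow_eq_one (FiniteField.pow_card_sub_one_eq_one x hx)
  exact ⟨k, hk.symm⟩

theorem ne_zero_of_isPrimitiveRoot (hω : IsPrimitiveRoot ω (Fintype.card F - 1)) : ω ≠ 0 :=
  hω.ne_zero (card_sub_one_pos F).ne'

theorem mem_cycl {N i : ℕ} {x : F} : x ∈ cycl ω N i ↔ ∃ k : ℕ, x = ω ^ (i + N * k) := by
  simp only [cycl, Finset.mem_filter, Finset.mem_univ, true_and]

theorem pow_mem_cycl_iff (hω : IsPrimitiveRoot ω (Fintype.card F - 1)) {N : ℕ}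
    (hN : N ∣ Fintype.card F - 1) {i k : ℕ} : ω ^ k ∈ cycl ω N i ↔ k ≡ i [MOD N] := by
  have hn := card_sub_one_pos F
  have hpow {a b : ℕ} : ω ^ a = ω ^ b ↔ a ≡ b [MOD Fintype.card F - 1] := by
    rw [(hω.isOfFinOrder hn.ne').pow_eq_pow_iff_modEq, ← hω.eq_orderOf]
  simp only [mem_cycl, hpow]
  constructor
  · rintro ⟨j, hj⟩
    simpa [Nat.ModEq] using hj.of_dvd hN
  · intro h
    -- Adding a multiple of the order to `k` makes the exponent at least `i`.
    have hle : i ≤ k + (Fintype.card F - 1) * i :=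
      (Nat.le_mul_of_pos_left i hn).trans (Nat.le_add_left _ _)
    have hmod : i ≡ k + (Fintype.card F - 1) * i [MOD N] :=
      h.symm.trans (by simpa using ((hN.mul_right i).modEq_zero_nat.symm.add_left k))
    obtain ⟨j, hj⟩ := (Nat.modEq_iff_dvd' hle).1 hmod
    refine ⟨j, ?_⟩
    rw [← hj, Nat.add_sub_cancel' hle]
    simp [Nat.ModEq]

theorem cycl_one (hω : IsPrimitiveRoot ω (Fintype.card F - 1)) (i : ℕ) :
    cycl ω 1 i = Finset.univ.erase 0 := by
  ext x
  simp only [Finset.mem_erase, Finset.mem_univ, and_true]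
  refine ⟨?_, fun hx ↦ ?_⟩
  · rw [mem_cycl]
    rintro ⟨k, rfl⟩
    exact pow_ne_zero _ (ne_zero_of_isPrimitiveRoot hω)
  · obtain ⟨k, rfl⟩ := exists_eq_pow_of_ne_zero hω hx
    exact (pow_mem_cycl_iff hω (one_dvd _)).2 (Nat.modEq_one)

theorem sum_cycl_eq_sum_sum_cycl_mul {A : Type*} [AddCommMonoid A]
    (hω : IsPrimitiveRoot ω (Fintype.card F - 1)) {N M : ℕ}
    (hNM : N * M ∣ Fintype.card F - 1) (i : ℕ) (g : F → A) :
    ∑ x ∈ cycl ω N i, g x = ∑ j ∈ Finset.range M, ∑ x ∈ cycl ω (N * M) (i + N * j), g x := by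
  have hpos : 0 < N * M := Nat.pos_of_dvd_of_pos hNM (card_sub_one_pos F)
  have hN : 0 < N := Nat.pos_of_mul_pos_right hpos
  have hM : 0 < M := Nat.pos_of_mul_pos_left hpos
  rw [← Finset.sum_biUnion]
  · refine Finset.sum_congr (Finset.ext fun x ↦ ?_) fun _ _ ↦ rfl
    simp only [Finset.mem_biUnion, Finset.mem_range, mem_cycl]
    constructor
    · rintro ⟨k, rfl⟩
      refine ⟨k % M, Nat.mod_lt _ hM, k / M, ?_⟩
      rw [add_assoc, mul_assoc, ← mul_add, Nat.mod_add_div]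
    · rintro ⟨j, -, k, rfl⟩
      exact ⟨j + M * k, by ring_nf⟩
  · intro j hj j' hj' hne
    refine Finset.disjoint_left.2 fun x hx hx' ↦ hne ?_
    obtain ⟨k, rfl⟩ := mem_cycl.1 hx
    have hmod : i + N * j ≡ i + N * j' [MOD N * M] := by
      simpa [Nat.ModEq] using (pow_mem_cycl_iff hω hNM).1 hx'
    exact (Nat.ModEq.mul_left_cancel' hN.ne' hmod.add_left_cancel').eq_of_lt_of_lt
      (Finset.mem_range.1 hj) (Finset.mem_range.1 hj')

theorem card_filter_mul_pow_eq (hω : IsPrimitiveRoot ω (Fintype.card F - 1)) {N : ℕ}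
    (hN : N ∣ Fintype.card F - 1) {a z : F} (ha : a ≠ 0) (hz : z ≠ 0) :
    ({x ∈ Finset.univ.erase (0 : F) | a * x ^ N = a * z ^ N} : Finset F).card = N := by
  have hn := card_sub_one_pos F
  have hN0 : 0 < N := Nat.pos_of_dvd_of_pos hN hn
  obtain ⟨e, he⟩ := hN
  have hζ : IsPrimitiveRoot (ω ^ e) N := hω.pow hn (by rw [he, mul_comm])
  have hzN : z ^ N ≠ 0 := pow_ne_zero N hz
  have hroots : ({x ∈ Finset.univ.erase (0 : F) | a * x ^ N = a * z ^ N} : Finset F) =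
      (Polynomial.nthRoots N (z ^ N)).toFinset := by
    ext x
    simp only [Finset.mem_filter, Finset.mem_erase, Finset.mem_univ, and_true,
      mul_right_inj' ha, Multiset.mem_toFinset, Polynomial.mem_nthRoots hN0,
      and_iff_right_iff_imp]
    rintro h rfl
    exact hzN (by rw [← h, zero_pow hN0.ne'])
  rw [hroots, Multiset.toFinset_card_of_nodup (hζ.nthRoots_nodup hzN), hζ.card_nthRoots,
    if_pos ⟨z, rfl⟩]

theorem sum_pow_mul_pow_eq_add_nsmul_sum_cycl {A : Type*} [AddCommMonoid A]
    (hω : IsPrimitiveRoot ω (Fintype.card F - 1)) {N : ℕ} (hN : N ∣ Fintype.card F - 1)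
    (i : ℕ) (g : F → A) :
    ∑ x, g (ω ^ i * x ^ N) = g 0 + N • ∑ x ∈ cycl ω N i, g x := by
  have hω0 := ne_zero_of_isPrimitiveRoot hω
  have hN0 : N ≠ 0 := ne_zero_of_dvd_ne_zero (card_sub_one_pos F).ne' hN
  have himage : (Finset.univ.erase (0 : F)).image (fun x ↦ ω ^ i * x ^ N) = cycl ω N i := by
    ext y
    simp only [Finset.mem_image, Finset.mem_erase, Finset.mem_univ, and_true, mem_cycl]
    constructor
    · rintro ⟨x, hx, rfl⟩
      obtain ⟨k, rfl⟩ := exists_eq_pow_of_ne_zero hω hx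
      exact ⟨k, by ring⟩
    · rintro ⟨k, rfl⟩
      exact ⟨ω ^ k, pow_ne_zero k hω0, by ring⟩
  rw [← Finset.add_sum_erase _ _ (Finset.mem_univ 0), zero_pow hN0, mul_zero,
    Finset.sum_comp g (fun x ↦ ω ^ i * x ^ N), himage, Finset.smul_sum]
  congr 1
  refine Finset.sum_congr rfl fun y hy ↦ ?_
  obtain ⟨z, hz, rfl⟩ := Finset.mem_image.1 (himage ▸ hy)
  rw [card_filter_mul_pow_eq hω hN (pow_ne_zero i hω0) (Finset.ne_of_mem_erase hz)]

theorem sum_sum_cycl_eq_neg_one {A : Type*} [CommRing A] [IsDomain A] {ψ : AddChar F A}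
    (hψ : ψ ≠ 1) (hω : IsPrimitiveRoot ω (Fintype.card F - 1)) {N : ℕ}
    (hN : N ∣ Fintype.card F - 1) :
    ∑ j ∈ Finset.range N, ∑ x ∈ cycl ω N j, ψ x = -1 := by
  have hsplit := sum_cycl_eq_sum_sum_cycl_mul hω ((one_mul N).symm ▸ hN) 0 ψ
  simp only [one_mul, zero_add, cycl_one hω] at hsplit
  have htotal := Finset.add_sum_erase Finset.univ ψ (Finset.mem_univ 0)
  rw [AddChar.map_zero_eq_one, AddChar.sum_eq_zero_of_ne_one hψ] at htotal
  rw [← hsplit]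
  exact eq_neg_of_add_eq_zero_right htotal

end CyclotomicClasses

section WeilSums

variable {R R' : Type*} [CommRing R] [Fintype R] [CommRing R']

/-- The Weil sum `∑ₓ ψ(a x σ(x))` of a ring automorphism `σ`. When `σ` is the `q`-power Frobenius of
a finite field, this is the sum of `ψ` over the values of the monomial `a x ^ (q + 1)`. -/
def weilSum (ψ : AddChar R R') (σ : R ≃+* R) (a : R) : R' :=
  ∑ x, ψ (a * (x * σ x))

theorem weilSum_mul_mul_apply (ψ : AddChar R R') (σ : R ≃+* R) (a : R) {b : R} (hb : IsUnit b) :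
    weilSum ψ σ (a * (b * σ b)) = weilSum ψ σ a := by
  obtain ⟨u, rfl⟩ := hb
  refine Fintype.sum_equiv (Units.mulLeft u) _ _ fun x ↦ congrArg ψ ?_
  simp only [Units.mulLeft_apply, map_mul]
  ring

theorem weilSum_mul_weilSum_neg [IsDomain R'] {ψ : AddChar R R'} (hψ : ψ.IsPrimitive)
    {σ : R ≃+* R} (hψσ : ∀ x, ψ (σ x) = ψ x) {a : R}
    (ha : ∀ x, σ a * σ (σ x) + a * x = 0 → x = 0) :
    weilSum ψ σ a * weilSum ψ σ (-a) = Fintype.card R := by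
  have hshift (x y : R) : ψ (a * ((x + y) * σ (x + y))) * ψ (-a * (y * σ y)) =
      ψ (a * (x * σ x)) * ψ (σ y * (σ a * σ (σ x) + a * x)) := by
    have hσterm : ψ (σ y * (σ a * σ (σ x))) = ψ (a * σ x * y) := by
      rw [← hψσ (a * σ x * y)]
      simp only [map_mul]
      ring_nf
    rw [mul_add (σ y), AddChar.map_add_eq_mul ψ (σ y * _), hσterm]
    simp only [← AddChar.map_add_eq_mul, map_add]
    ring_nf
  have hinner (x : R) : ∑ y, ψ (σ y * (σ a * σ (σ x) + a * x)) =
      if x = 0 then (Fintype.card R : R') else 0 := by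
    rw [σ.bijective.sum_comp fun z ↦ ψ (z * (σ a * σ (σ x) + a * x)),
      AddChar.sum_mulShift _ hψ, Nat.cast_ite, Nat.cast_zero]
    exact if_congr ⟨ha x, by rintro rfl; simp⟩ rfl rfl
  calc weilSum ψ σ a * weilSum ψ σ (-a)
      = ∑ y, ∑ x, ψ (a * (x * σ x)) * ψ (-a * (y * σ y)) := by
        rw [weilSum, weilSum, Finset.sum_mul_sum, Finset.sum_comm]
    _ = ∑ y, ∑ x, ψ (a * ((x + y) * σ (x + y))) * ψ (-a * (y * σ y)) :=
        Finset.sum_congr rfl fun y _ ↦ (Equiv.sum_comp (Equiv.addRight y)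
          fun x ↦ ψ (a * (x * σ x)) * ψ (-a * (y * σ y))).symm
    _ = ∑ x, ψ (a * (x * σ x)) * ∑ y, ψ (σ y * (σ a * σ (σ x) + a * x)) := by
        simp only [hshift, Finset.mul_sum]
        exact Finset.sum_comm
    _ = Fintype.card R := by simp [hinner]

theorem weilSum_sq [IsDomain R'] {ψ : AddChar R R'} (hψ : ψ.IsPrimitive) {σ : R ≃+* R}
    (hψσ : ∀ x, ψ (σ x) = ψ x) {a : R} (ha : ∀ x, σ a * σ (σ x) + a * x = 0 → x = 0)
    {ε : R} (hε : ε * σ ε = -1) : weilSum ψ σ a ^ 2 = Fintype.card R := by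
  have hunit : IsUnit ε := IsUnit.of_mul_eq_one (-σ ε) (by rw [mul_neg, hε, neg_neg])
  have hneg : weilSum ψ σ (-a) = weilSum ψ σ a := by
    rw [← weilSum_mul_mul_apply ψ σ a hunit, hε, mul_neg_one]
  rw [← weilSum_mul_weilSum_neg hψ hψσ ha, hneg, sq]

end WeilSums

section Integrality

theorem isIntegral_addChar_apply {A R : Type*} [AddGroup A] [Finite A] [CommRing R]
    (ψ : AddChar A R) (x : A) : IsIntegral ℤ (ψ x) := by
  refine IsIntegral.of_pow (n := Nat.card A) Nat.card_pos ?_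
  rw [← AddChar.map_nsmul_eq_pow, card_nsmul_eq_zero', AddChar.map_zero_eq_one]
  exact isIntegral_one

variable {K : Type*} [Field K] [CharZero K]

theorem dvd_of_isIntegral_of_mul_eq {z : K} (hz : IsIntegral ℤ z) {d n : ℤ} (hd : d ≠ 0)
    (h : (d : K) * z = n) : d ∣ n := by
  have hdK : (d : K) ≠ 0 := Int.cast_ne_zero.2 hd
  obtain ⟨k, rfl⟩ := hz.exists_int_iff_exists_rat.1 ⟨n / d, by
    push_cast
    rw [← h, mul_div_cancel_left₀ _ hdK]⟩
  exact ⟨k, by exact_mod_cast h.symm⟩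

theorem add_one_dvd_pow_two_mul_sub_one (q s : ℕ) : q + 1 ∣ q ^ (2 * s) - 1 := by
  have h : q ^ 2 - 1 ∣ (q ^ 2) ^ s - 1 := by
    simpa only [one_pow] using Nat.sub_dvd_pow_sub_pow (q ^ 2) 1 s
  rw [pow_mul]
  exact (Dvd.intro _ (by simpa using (Nat.sq_sub_sq q 1).symm)).trans h

-- The other square root `-q ^ (2 * s)` is excluded by its residue `-1` modulo `q + 1`.
theorem one_add_mul_eq_pow_of_sq_eq {q s : ℕ} (hq : 2 ≤ q) {T : K} (hT : IsIntegral ℤ T)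
    (h : (1 + (q + 1) * T) ^ 2 = (q : K) ^ (4 * s)) : 1 + (q + 1) * T = (q : K) ^ (2 * s) := by
  have hsq : (1 + (q + 1) * T) ^ 2 = ((q : K) ^ (2 * s)) ^ 2 := by
    rw [h, ← pow_mul]
    ring_nf
  refine (sq_eq_sq_iff_eq_or_eq_neg.1 hsq).resolve_right fun hneg ↦ ?_
  have hdvd_add : (q + 1 : ℤ) ∣ -(q ^ (2 * s) + 1) :=
    dvd_of_isIntegral_of_mul_eq hT (by positivity) (by push_cast; linear_combination hneg)
  have hdvd_sub : (q + 1 : ℤ) ∣ q ^ (2 * s) - 1 := by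
    have := Int.natCast_dvd_natCast.2 (add_one_dvd_pow_two_mul_sub_one q s)
    rwa [Nat.cast_sub (Nat.one_le_pow _ _ (by lia)), Nat.cast_add, Nat.cast_pow, Nat.cast_one]
      at this
  have hdvd_two : (q + 1 : ℤ) ∣ 2 := by
    have := dvd_add hdvd_add hdvd_sub
    rw [← dvd_neg]
    ring_nf at this ⊢
    exact this
  have := Int.le_of_dvd two_pos hdvd_two
  lia

end Integrality

section Semiprimitive

variable {F : Type*} [Field F] [Fintype F] {σ : F ≃+* F} {ω : F} {q s : ℕ}

theorem two_le_of_card_eq_pow {n : ℕ} (hcard : Fintype.card F = q ^ n) : 2 ≤ q := by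
  have hF := Fintype.one_lt_card (α := F)
  rw [hcard] at hF
  by_contra! hq
  interval_cases q
  · exact absurd hF (Nat.not_lt.2 (zero_pow_le_one n))
  · simp at hF

theorem two_lt_card_of_card_eq_pow (hcard : Fintype.card F = q ^ (4 * s)) :
    2 < Fintype.card F := by
  have hs : s ≠ 0 := by
    rintro rfl
    exact Fintype.one_lt_card.ne' hcard
  calc 2 < 2 ^ (4 * s) := lt_self_pow₀ one_lt_two (by lia)
    _ ≤ Fintype.card F := hcard ▸ Nat.pow_le_pow_left (two_le_of_card_eq_pow hcard) _

theorem add_one_mul_sub_one_mul_geomSum (hq : 0 < q) (n : ℕ) :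
    (q + 1) * ((q - 1) * ∑ i ∈ Finset.range n, (q ^ 2) ^ i) = q ^ (2 * n) - 1 := by
  zify [hq, Nat.one_le_pow _ _ hq]
  rw [pow_mul, ← mul_geom_sum]
  ring

theorem neg_one_pow_geomSum_eq_one {R : Type*} [CommRing R] (h : (-1 : R) ^ q = -1) (s : ℕ) :
    (-1 : R) ^ (∑ i ∈ Finset.range (2 * s), (q ^ 2) ^ i) = 1 := by
  have hfixed (n : ℕ) : (-1 : R) ^ q ^ n = -1 := by
    simpa only [pow_iterate] using Function.iterate_fixed (f := (· ^ q)) h n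
  simp only [← Finset.prod_pow_eq_pow_sum, ← pow_mul, hfixed, Finset.prod_const, Finset.card_range,
    pow_mul (-1 : R) 2, neg_one_sq, one_pow]

theorem exists_card_sub_one_eq_add_one_mul (hσ : ∀ x, σ x = x ^ q)
    (hcard : Fintype.card F = q ^ (4 * s)) :
    ∃ E : ℕ, Fintype.card F - 1 = (q + 1) * ((q - 1) * E) ∧ (-1 : F) ^ E = 1 := by
  refine ⟨∑ i ∈ Finset.range (2 * s), (q ^ 2) ^ i, ?_, neg_one_pow_geomSum_eq_one ?_ s⟩
  · rw [add_one_mul_sub_one_mul_geomSum (by have := two_le_of_card_eq_pow hcard; lia), hcard]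
    ring_nf
  · rw [← hσ, map_neg, map_one]

theorem exists_mul_apply_eq_neg_one (hσ : ∀ x, σ x = x ^ q)
    (hcard : Fintype.card F = q ^ (4 * s)) (hω : IsPrimitiveRoot ω (Fintype.card F - 1)) :
    ∃ ε : F, ε * σ ε = -1 := by
  obtain ⟨E, hE, hneg⟩ := exists_card_sub_one_eq_add_one_mul hσ hcard
  obtain ⟨k, hk⟩ := exists_eq_pow_of_ne_zero hω (neg_ne_zero.2 one_ne_zero)
  have hpos : 0 < (q - 1) * E := Nat.pos_of_mul_pos_left (hE ▸ card_sub_one_pos F)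
  obtain ⟨j, rfl⟩ : q + 1 ∣ k := by
    rw [← pow_pow_eq_one_iff_dvd (hE ▸ hω) hpos, ← hk, mul_comm, pow_mul, hneg, one_pow]
  exact ⟨ω ^ j, by rw [hσ, hk]; ring⟩

theorem eq_zero_of_apply_mul_add_eq_zero (hσ : ∀ x, σ x = x ^ q)
    (hcard : Fintype.card F = q ^ (4 * s)) (hω : IsPrimitiveRoot ω (Fintype.card F - 1))
    {c : ℕ} (hc : ¬ q + 1 ∣ c) {x : F} (h : σ (ω ^ c) * σ (σ x) + ω ^ c * x = 0) : x = 0 := by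
  by_contra hx
  obtain ⟨E, hE, hneg⟩ := exists_card_sub_one_eq_add_one_mul hσ hcard
  obtain ⟨r, rfl⟩ : ∃ r, q = r + 1 :=
    ⟨q - 1, by have := two_le_of_card_eq_pow hcard; lia⟩
  rw [Nat.add_sub_cancel] at hE
  have hpos : 0 < r * E := Nat.pos_of_mul_pos_left (hE ▸ card_sub_one_pos F)
  have hcx : ω ^ c * x ≠ 0 := mul_ne_zero (pow_ne_zero c (ne_zero_of_isPrimitiveRoot hω)) hx
  have hneg_one : (ω ^ c) ^ r * x ^ ((r + 1 + 1) * r) = -1 := by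
    refine mul_right_cancel₀ hcx ?_
    rw [hσ, hσ, hσ] at h
    linear_combination h
  refine hc ((pow_pow_eq_one_iff_dvd (hE ▸ hω) hpos c).1 ?_)
  calc (ω ^ c) ^ (r * E)
      = (ω ^ c) ^ (r * E) * x ^ (Fintype.card F - 1) := by
        rw [FiniteField.pow_card_sub_one_eq_one x hx, mul_one]
    _ = ((ω ^ c) ^ r * x ^ ((r + 1 + 1) * r)) ^ E := by rw [hE]; ring
    _ = 1 := by rw [hneg_one, hneg]

variable {K : Type*} [Field K] [CharZero K] {ψ : AddChar F K}

theorem one_add_mul_sum_cycl_add_one (hψ : ψ ≠ 1) (hψσ : ∀ x, ψ (σ x) = ψ x)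
    (hσ : ∀ x, σ x = x ^ q) (hcard : Fintype.card F = q ^ (4 * s))
    (hω : IsPrimitiveRoot ω (Fintype.card F - 1)) {c : ℕ} (hc : ¬ q + 1 ∣ c) :
    1 + (q + 1) * ∑ x ∈ cycl ω (q + 1) c, ψ x = (q : K) ^ (2 * s) := by
  obtain ⟨E, hE, -⟩ := exists_card_sub_one_eq_add_one_mul hσ hcard
  obtain ⟨ε, hε⟩ := exists_mul_apply_eq_neg_one hσ hcard hω
  have hweil : weilSum ψ σ (ω ^ c) = 1 + (q + 1) * ∑ x ∈ cycl ω (q + 1) c, ψ x := by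
    simp only [weilSum, hσ, ← pow_succ']
    rw [sum_pow_mul_pow_eq_add_nsmul_sum_cycl hω (Dvd.intro _ hE.symm), AddChar.map_zero_eq_one,
      nsmul_eq_mul, Nat.cast_add_one]
  refine one_add_mul_eq_pow_of_sq_eq (two_le_of_card_eq_pow hcard)
    (IsIntegral.sum _ fun x _ ↦ isIntegral_addChar_apply ψ x) ?_
  rw [← hweil, weilSum_sq (.of_ne_one hψ) hψσ
    (fun x ↦ eq_zero_of_apply_mul_add_eq_zero hσ hcard hω hc) hε, hcard, Nat.cast_pow]

theorem sum_cycl_add_one (hψ : ψ ≠ 1) (hψσ : ∀ x, ψ (σ x) = ψ x)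
    (hσ : ∀ x, σ x = x ^ q) (hcard : Fintype.card F = q ^ (4 * s))
    (hω : IsPrimitiveRoot ω (Fintype.card F - 1)) {c : ℕ} (hc : c < q + 1) :
    ∑ x ∈ cycl ω (q + 1) c, ψ x =
      ((q : K) ^ (2 * s) - 1) / (q + 1) - if c = 0 then (q : K) ^ (2 * s) else 0 := by
  have hq : (q : K) + 1 ≠ 0 := Nat.cast_add_one_ne_zero q
  have hne {c : ℕ} (hc0 : c ≠ 0) (hc : c < q + 1) :
      ∑ x ∈ cycl ω (q + 1) c, ψ x = ((q : K) ^ (2 * s) - 1) / (q + 1) := by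
    rw [eq_div_iff hq]
    linear_combination one_add_mul_sum_cycl_add_one hψ hψσ hσ hcard hω
      (Nat.not_dvd_of_pos_of_lt (Nat.pos_of_ne_zero hc0) hc)
  split_ifs with hc0
  · subst hc0
    obtain ⟨E, hE, -⟩ := exists_card_sub_one_eq_add_one_mul hσ hcard
    have htotal := sum_sum_cycl_eq_neg_one hψ hω (Dvd.intro _ hE.symm)
    rw [Finset.sum_range_succ', Finset.sum_congr rfl fun j hj ↦
      hne j.succ_ne_zero (Nat.succ_lt_succ (Finset.mem_range.1 hj)), Finset.sum_const,
      Finset.card_range, nsmul_eq_mul] at htotal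
    field_simp at htotal ⊢
    linear_combination htotal
  · rw [hne hc0 hc, sub_zero]

theorem sum_cycl_of_dvd_add_one (hψ : ψ ≠ 1) (hψσ : ∀ x, ψ (σ x) = ψ x)
    (hσ : ∀ x, σ x = x ^ q) (hcard : Fintype.card F = q ^ (4 * s))
    (hω : IsPrimitiveRoot ω (Fintype.card F - 1)) {N i : ℕ} (hN : N ∣ q + 1) (hi : i < N) :
    ∑ x ∈ cycl ω N i, ψ x =
      ((q : K) ^ (2 * s) - 1) / N - if i = 0 then (q : K) ^ (2 * s) else 0 := by
  obtain ⟨M, hM⟩ := hN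
  obtain ⟨E, hE, -⟩ := exists_card_sub_one_eq_add_one_mul hσ hcard
  have hM0 : 0 < M := Nat.pos_of_ne_zero (by rintro rfl; simp at hM)
  have hlt {j : ℕ} (hj : j < M) : i + N * j < q + 1 := by
    calc i + N * j < N + N * j := Nat.add_lt_add_right hi _
      _ = N * (j + 1) := by ring
      _ ≤ q + 1 := hM ▸ Nat.mul_le_mul_left N hj
  have hzero (j : ℕ) : i + N * j = 0 ↔ j = 0 ∧ i = 0 := by
    simp [(i.zero_le.trans_lt hi).ne', and_comm]
  have hK : (q : K) + 1 = N * M := by exact_mod_cast hM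
  rw [sum_cycl_eq_sum_sum_cycl_mul hω (hM ▸ Dvd.intro _ hE.symm), ← hM,
    Finset.sum_congr rfl fun j hj ↦
      sum_cycl_add_one hψ hψσ hσ hcard hω (hlt (Finset.mem_range.1 hj))]
  simp only [hzero, ite_and, Finset.sum_sub_distrib, Finset.sum_const, Finset.card_range,
    nsmul_eq_mul, Finset.sum_ite_eq', Finset.mem_range, if_pos hM0, hK]
  have hMK : (M : K) ≠ 0 := Nat.cast_ne_zero.2 hM0.ne'
  rw [← div_div, mul_div_cancel₀ _ hMK]

end Semiprimitive

section CanonicalCharacter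

variable (p : ℕ) [Fact p.Prime] (F : Type*) [Field F] [Algebra (ZMod p) F]

/-- The function `canChar p F` bundled as an additive character: the standard character of `ZMod p`
composed with the absolute trace. -/
def canonicalAddChar : AddChar F ℂ :=
  (ZMod.stdAddChar (N := p)).compAddMonoidHom (Algebra.trace (ZMod p) F).toAddMonoidHom

theorem canonicalAddChar_apply [Fintype F] (x : F) : canonicalAddChar p F x = canChar p F x := by
  simp [canonicalAddChar, canChar, ZMod.stdAddChar_apply, ZMod.toCircle_apply]

theorem canonicalAddChar_ne_one [Finite F] : canonicalAddChar p F ≠ 1 := by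
  intro h
  obtain ⟨x, hx⟩ := Algebra.trace_surjective (ZMod p) F 1
  have hone : ZMod.stdAddChar (1 : ZMod p) = ZMod.stdAddChar (0 : ZMod p) := by
    rw [AddChar.map_zero_eq_one, ← hx]
    exact DFunLike.congr_fun h x
  exact one_ne_zero (ZMod.injective_stdAddChar hone)

theorem canonicalAddChar_algEquiv_apply (σ : F ≃ₐ[ZMod p] F) (x : F) :
    canonicalAddChar p F (σ x) = canonicalAddChar p F x :=
  congrArg ZMod.stdAddChar (Algebra.trace_eq_of_algEquiv σ x)

theorem exists_algEquiv_apply_eq_pow_prime_pow [Finite F] (f : ℕ) :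
    ∃ σ : F ≃ₐ[ZMod p] F, ∀ x, σ x = x ^ p ^ f :=
  ⟨FiniteField.frobeniusAlgEquivOfAlgebraic (ZMod p) F ^ f, fun x ↦ by
    rw [AlgEquiv.coe_pow, FiniteField.coe_frobeniusAlgEquivOfAlgebraic_iterate, ZMod.card]⟩

end CanonicalCharacter

theorem stmt_5_general (p : ℕ) [Fact p.Prime] {f q s N i : ℕ} (hq : q = p ^ f) (hN : N ∣ q + 1)
    {F : Type*} [Field F] [Fintype F] [Algebra (ZMod p) F]
    (hcard : Fintype.card F = q ^ (4 * s)) {ω : F} (hω : ∀ x : F, x ≠ 0 → ∃ k : ℕ, x = ω ^ k)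
    (hi : i < N) :
    ∑ x ∈ cycl ω N i, canChar p F x =
      if i = 0 then (((q ^ (2 * s) - 1) / N : ℕ) : ℂ) - (q : ℂ) ^ (2 * s)
      else (((q ^ (2 * s) - 1) / N : ℕ) : ℂ) := by
  have hq2 : 2 ≤ q := two_le_of_card_eq_pow hcard
  obtain ⟨σ, hσ⟩ := exists_algEquiv_apply_eq_pow_prime_pow p F f
  have hdiv : (((q ^ (2 * s) - 1) / N : ℕ) : ℂ) = ((q : ℂ) ^ (2 * s) - 1) / N := by
    rw [Nat.cast_div (hN.trans (add_one_dvd_pow_two_mul_sub_one q s)) (by norm_cast; lia),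
      Nat.cast_pred (by positivity), Nat.cast_pow]
  simp only [← canonicalAddChar_apply, hdiv]
  rw [sum_cycl_of_dvd_add_one (canonicalAddChar_ne_one p F)
    (canonicalAddChar_algEquiv_apply p F σ) (σ := σ.toRingEquiv) (hq ▸ hσ) hcard
    (isPrimitiveRoot_card_sub_one_of_forall_exists_pow (two_lt_card_of_card_eq_pow hcard) hω) hN hi]
  split_ifs <;> ring

theorem stmt_5 (p : ℕ) [Fact p.Prime] (f : ℕ) (hf : 0 < f) (q : ℕ) (hq : q = p ^ f)
    (m : ℕ) (hm : 0 < m) (hdvd : 2 * m ∣ q + 1)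
    {F : Type*} [Field F] [Fintype F] [Algebra (ZMod p) F]
    (hcard : Fintype.card F = q ^ 4)
    (ω : F) (hω : ∀ x : F, x ≠ 0 → ∃ k : ℕ, x = ω ^ k)
    (i : ℕ) (hi : i ≤ 2 * m - 1) :
    ∑ x ∈ cycl ω (2 * m) i, canChar p F x =
      if i = 0 then (((q ^ 2 - 1) / (2 * m) : ℕ) : ℂ) - (q : ℂ) ^ 2
      else (((q ^ 2 - 1) / (2 * m) : ℕ) : ℂ) :=
  stmt_5_general p (s := 1) hq hdvd hcard hω (by lia)
end
end

section
/- Let p be a prime, N > 2, and suppose there is a positive integer j with p^j ≡ −1 (mod N); choose j minimal and let f = 2js for a positive integer s. Then the Cayley graph on (F_{p^f},+) with connection set C_0^{(N,p^f)} is strongly regular with parameters (u², c(u+(−1)^s), −(−1)^s u + c² + 3(−1)^s c, c² + (−1)^s c), where u = p^{js} and c = (u−(−1)^s)/N. -/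
open scoped Classical

noncomputable section

/-!
Let `χ` be a multiplicative character of order `N` whose kernel is the cyclotomic class. For a
Frobenius-invariant additive character, `g(χ ^ i)` is also the Gauss sum of `(χ ^ i) ^ (p ^ j)`,
which is `(χ ^ i)⁻¹` as `p ^ j ≡ -1` modulo `N`; hence `g(χ ^ i) ^ 2 = u ^ 2`. Other nontrivial
additive characters only change `g(χ ^ i)` by a root of unity, so `g(χ ^ i) / u` is always a root
of unity. The Gauss period `η` of a nontrivial additive character satisfies
`1 + N η = ∑ 0 < i < N, g(χ ^ i)`, so `(1 + N η) / u` is a sum of `N - 1` roots of unity. The class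
is stable under scaling by the prime field, which makes `η` an integer; therefore `(1 + N η) / u`
is an integer of absolute value less than `N`, congruent to `ε` modulo `N`. This leaves the two
values `η = ε c` and `η = ε c - ε u`, and a Cayley graph with two nontrivial eigenvalues is
strongly regular.
-/

section SumsOfRootsOfUnity

theorem exists_int_eq_sum_of_pow_eq_one {ι : Type*} {s : Finset ι} {z : ι → ℂ} {m : ℕ}
    (hm : m ≠ 0) (hz : ∀ i ∈ s, z i ^ m = 1) (hrat : ∃ r : ℚ, ∑ i ∈ s, z i = r) :
    ∃ n : ℤ, ∑ i ∈ s, z i = n ∧ |n| ≤ s.card := by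
  have hint : IsIntegral ℤ (∑ i ∈ s, z i) := IsIntegral.sum _ fun i hi =>
    IsIntegral.of_pow hm.bot_lt (hz i hi ▸ isIntegral_one)
  obtain ⟨n, hn⟩ := (IsIntegral.exists_int_iff_exists_rat hint).1 hrat
  refine ⟨n, hn, ?_⟩
  have hnorm : ‖(n : ℂ)‖ ≤ ∑ i ∈ s, 1 := hn ▸ norm_sum_le_of_le s fun i hi =>
    (Complex.norm_eq_one_of_pow_eq_one (hz i hi) hm).le
  rw [Complex.norm_intCast, Finset.sum_const, nsmul_one] at hnorm
  exact_mod_cast hnorm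

-- `∑ d ∈ D, ψ d` is rational because averaging it over the scalars `t ≠ 0` gives sums of `ψ` over
-- lines, which are `0` or `|K|` up to the term `t = 0`.
theorem exists_int_eq_sum_addChar {K V : Type*} [Field K] [Finite K] [AddCommGroup V] [Module K V]
    {D : Finset V} (hD : ∀ t : K, t ≠ 0 → ∀ d ∈ D, t • d ∈ D) (ψ : AddChar V ℂ) :
    ∃ m : ℤ, ∑ d ∈ D, ψ d = m := by
  have := Fintype.ofFinite K
  have hpow (d : V) : ψ d ^ Fintype.card K = 1 := by
    rw [← AddChar.map_nsmul_eq_pow, ← Nat.cast_smul_eq_nsmul K, FiniteField.cast_card_eq_zero,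
      zero_smul, AddChar.map_zero_eq_one]
  have hscale (t : K) (ht : t ≠ 0) : ∑ d ∈ D, ψ (t • d) = ∑ d ∈ D, ψ d :=
    Finset.sum_bij' (fun d _ => t • d) (fun d _ => t⁻¹ • d) (hD t ht) (hD _ (inv_ne_zero ht))
      (fun d _ => inv_smul_smul₀ ht d) (fun d _ => smul_inv_smul₀ ht d) fun _ _ => rfl
  have horbit (d : V) : ∃ n : ℤ, ∑ t ∈ {0}ᶜ, ψ ((t : K) • d) = n := by
    let φ := ψ.compAddMonoidHom (LinearMap.toSpanSingleton K V d).toAddMonoidHom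
    have hsum := AddChar.sum_eq_ite φ
    rw [Fintype.sum_eq_add_sum_compl 0, AddChar.map_zero_eq_one, ← eq_sub_iff_add_eq'] at hsum
    exact ⟨(if φ = 0 then (Fintype.card K : ℤ) else 0) - 1, by push_cast; exact hsum⟩
  choose n hn using horbit
  have hcard : ((Fintype.card K - 1 : ℕ) : ℂ) ≠ 0 :=
    Nat.cast_ne_zero.2 (Nat.sub_pos_of_lt Fintype.one_lt_card).ne'
  have hmul : (∑ d ∈ D, ψ d) * (Fintype.card K - 1 : ℕ) = ∑ d ∈ D, (n d : ℂ) := by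
    calc _ = ∑ t ∈ ({0}ᶜ : Finset K), ∑ d ∈ D, ψ (t • d) := by
          rw [Finset.sum_congr rfl fun t ht => hscale t (by simpa using ht), Finset.sum_const,
            Finset.card_compl, Finset.card_singleton, nsmul_eq_mul, mul_comm]
      _ = _ := by rw [Finset.sum_comm]; exact Finset.sum_congr rfl fun d _ => hn d
  have hrat : ∑ d ∈ D, ψ d = ((∑ d ∈ D, n d) / (Fintype.card K - 1 : ℕ) : ℚ) := by
    rw [eq_div_of_mul_eq hcard hmul]; push_cast; rfl
  obtain ⟨m, hm, -⟩ :=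
    exists_int_eq_sum_of_pow_eq_one Fintype.card_ne_zero (fun d _ => hpow d) ⟨_, hrat⟩
  exact ⟨m, hm⟩

end SumsOfRootsOfUnity

section CharKernel

/-- The kernel of a multiplicative character `χ`, as a finset of the underlying monoid rather than
a subgroup of its units, so that additive characters can be summed over it. -/
def charKernel {R R' : Type*} [CommMonoid R] [Fintype R] [CommMonoidWithZero R']
    (χ : MulChar R R') : Finset R :=
  Finset.univ.filter fun x => χ x = 1

theorem mem_charKernel {R R' : Type*} [CommMonoid R] [Fintype R] [CommMonoidWithZero R']
    {χ : MulChar R R'} {x : R} : x ∈ charKernel χ ↔ χ x = 1 := by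
  simp [charKernel]

theorem sum_range_orderOf_mulChar_pow_apply {R R' : Type*} [CommMonoid R] [CommRing R']
    [IsDomain R'] (χ : MulChar R R') (x : R) :
    ∑ i ∈ Finset.range (orderOf χ), (χ ^ i) x = if χ x = 1 then (orderOf χ : R') else 0 := by
  by_cases hx : IsUnit x
  · obtain ⟨x, rfl⟩ := hx
    simp only [MulChar.pow_apply_coe]
    split_ifs with h
    · simp [h]
    · refine (mul_eq_zero.1 ?_).resolve_left (sub_ne_zero.2 h)
      rw [mul_geom_sum, ← MulChar.pow_apply_coe, pow_orderOf_eq_one, MulChar.one_apply_coe,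
        sub_self]
  · simp [MulChar.map_nonunit _ hx]

theorem orderOf_mul_sum_charKernel {R R' : Type*} [CommRing R] [Fintype R] [CommRing R']
    [IsDomain R'] (χ : MulChar R R') (ψ : AddChar R R') :
    orderOf χ * ∑ x ∈ charKernel χ, ψ x = ∑ i ∈ Finset.range (orderOf χ), gaussSum (χ ^ i) ψ := by
  simp only [gaussSum]
  rw [Finset.sum_comm]
  simp only [← Finset.sum_mul, sum_range_orderOf_mulChar_pow_apply, charKernel, ite_mul, zero_mul,
    ← Finset.sum_filter, Finset.mul_sum]

theorem orderOf_mul_sum_charKernel_of_ne_one {R R' : Type*} [Field R] [Fintype R] [CommRing R']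
    [IsDomain R'] (χ : MulChar R R') {ψ : AddChar R R'} (hψ : ψ ≠ 1) :
    orderOf χ * ∑ x ∈ charKernel χ, ψ x =
      ∑ i ∈ Finset.range (orderOf χ - 1), gaussSum (χ ^ (i + 1)) ψ - 1 := by
  rw [orderOf_mul_sum_charKernel, ← Nat.sub_add_cancel χ.orderOf_pos, Finset.sum_range_succ',
    pow_zero, gaussSum_one_left hψ, Nat.add_sub_cancel, sub_eq_add_neg]

theorem orderOf_mul_card_charKernel {R R' : Type*} [Field R] [Fintype R] [CommRing R']
    [IsDomain R'] [CharZero R'] (χ : MulChar R R') :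
    orderOf χ * (charKernel χ).card = Nat.card Rˣ := by
  have h := orderOf_mul_sum_charKernel χ 1
  rw [Finset.sum_eq_single_of_mem 0 (Finset.mem_range.2 χ.orderOf_pos)] at h
  · simp only [AddChar.one_apply, Finset.sum_const, nsmul_one, pow_zero,
      gaussSum_one_one] at h
    exact_mod_cast h
  · intro i hi hi0
    exact gaussSum_one_right (pow_ne_one_of_lt_orderOf hi0 (Finset.mem_range.1 hi))

theorem mulChar_algebraMap_eq_one {K F R : Type*} [Field K] [Finite K] [Field F] [Finite F]
    [Algebra K F] [CommMonoidWithZero R] {χ : MulChar F R}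
    (h : Nat.card Kˣ * orderOf χ ∣ Nat.card Fˣ) {t : K} (ht : t ≠ 0) :
    χ (algebraMap K F t) = 1 := by
  obtain ⟨g, hg⟩ := IsCyclic.exists_generator (α := Fˣ)
  let t' : Fˣ := Units.map (algebraMap K F).toMonoidHom (Units.mk0 t ht)
  obtain ⟨i, hi : g ^ i = t'⟩ := mem_powers_iff_mem_zpowers.2 (hg t')
  have ht' : t' ^ Nat.card Kˣ = 1 := by
    rw [← map_pow, pow_card_eq_one', map_one]
  have hdvd : Nat.card Kˣ * orderOf χ ∣ Nat.card Kˣ * i := by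
    refine h.trans ?_
    rw [← orderOf_eq_card_of_forall_mem_zpowers hg, orderOf_dvd_iff_pow_eq_one, mul_comm,
      pow_mul, hi, ht']
  obtain ⟨k, rfl⟩ := Nat.dvd_of_mul_dvd_mul_left Nat.card_pos hdvd
  calc χ (algebraMap K F t) = χ t' := rfl
    _ = 1 := by
      rw [← hi, Units.val_pow_eq_pow_val, map_pow, pow_mul, ← MulChar.pow_apply_coe,
        pow_orderOf_eq_one, MulChar.one_apply_coe, one_pow]

theorem neg_one_mem_charKernel {K F R : Type*} [Field K] [Finite K] [Field F] [Fintype F]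
    [Algebra K F] [CommMonoidWithZero R] {χ : MulChar F R}
    (h : Nat.card Kˣ * orderOf χ ∣ Nat.card Fˣ) : -1 ∈ charKernel χ := by
  simpa [mem_charKernel] using mulChar_algebraMap_eq_one h (neg_ne_zero.2 (one_ne_zero (α := K)))

theorem exists_int_sum_charKernel {K F : Type*} [Field K] [Finite K] [Field F] [Fintype F]
    [Algebra K F] {χ : MulChar F ℂ} (h : Nat.card Kˣ * orderOf χ ∣ Nat.card Fˣ) (ψ : AddChar F ℂ) :
    ∃ m : ℤ, ∑ x ∈ charKernel χ, ψ x = m :=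
  exists_int_eq_sum_addChar (K := K) (fun t ht d hd => mem_charKernel.2 <| by
    rw [Algebra.smul_def, map_mul, mulChar_algebraMap_eq_one h ht, one_mul, mem_charKernel.1 hd]) ψ

end CharKernel

section GaussSum

theorem exists_isPrimitive_addChar_frobenius_invariant (p : ℕ) [Fact p.Prime] (F : Type*)
    [Field F] [Finite F] [CharP F p] :
    ∃ ψ : AddChar F ℂ, ψ.IsPrimitive ∧ ∀ x, ψ (x ^ p) = ψ x := by
  let _ : Algebra (ZMod p) F := ZMod.algebra F p
  have hstd : (ZMod.stdAddChar (N := p)).IsPrimitive := ZMod.isPrimitive_stdAddChar p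
  refine ⟨ZMod.stdAddChar.compAddMonoidHom (Algebra.trace (ZMod p) F).toAddMonoidHom,
    AddChar.IsPrimitive.of_ne_one fun h => ?_, fun x => ?_⟩
  · obtain ⟨x, hx⟩ := Algebra.trace_surjective (ZMod p) F 1
    have h1 : ZMod.stdAddChar (1 : ZMod p) = 1 := hx ▸ DFunLike.congr_fun h x
    exact one_ne_zero ((hstd.zmod_char_eq_one_iff p 1).1 h1)
  · have htr := Algebra.trace_eq_of_algEquiv
      (FiniteField.frobeniusAlgEquivOfAlgebraic (ZMod p) F) x
    rw [FiniteField.coe_frobeniusAlgEquivOfAlgebraic, ZMod.card] at htr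
    exact congrArg ZMod.stdAddChar htr

theorem exists_eq_mulShift_of_isPrimitive {F : Type*} [Field F] [Finite F] {ψ φ : AddChar F ℂ}
    (hψ : ψ.IsPrimitive) (hφ : φ ≠ 1) : ∃ a : Fˣ, φ = ψ.mulShift a := by
  have := Fintype.ofFinite F
  have hbij : Function.Bijective ψ.mulShift :=
    (Fintype.bijective_iff_injective_and_card _).2
      ⟨AddChar.to_mulShift_inj_of_isPrimitive hψ, AddChar.card_eq.symm⟩
  obtain ⟨a, rfl⟩ := hbij.surjective φ
  have ha : a ≠ 0 := by
    rintro rfl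
    exact hφ ψ.mulShift_zero
  exact ⟨Units.mk0 a ha, rfl⟩

theorem gaussSum_pow_prime_pow {R R' : Type*} [Field R] [Fintype R] [CommRing R'] {p : ℕ}
    [Fact p.Prime] [CharP R p] {ψ : AddChar R R'} (hψ : ∀ x, ψ (x ^ p) = ψ x) (χ : MulChar R R')
    (n : ℕ) :
    gaussSum (χ ^ p ^ n) ψ = gaussSum χ ψ := by
  have hstep (χ : MulChar R R') : gaussSum (χ ^ p) ψ = gaussSum χ ψ :=
    Fintype.sum_equiv (frobeniusEquiv R p).toEquiv _ _ fun x => by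
      simp [frobenius_def, hψ, MulChar.pow_apply' χ (NeZero.ne p)]
  induction n with
  | zero => rw [pow_zero, pow_one]
  | succ n ih => rw [pow_succ, pow_mul, hstep, ih]

theorem gaussSum_sq_of_semiprimitive {R R' : Type*} [Field R] [Fintype R] [CommRing R']
    [IsDomain R'] {p n : ℕ} [Fact p.Prime] [CharP R p] {χ : MulChar R R'} {ψ : AddChar R R'}
    (hψ : ψ.IsPrimitive) (hfrob : ∀ x, ψ (x ^ p) = ψ x) (hχ1 : χ ≠ 1)
    (hχ : χ ^ (p ^ n + 1) = 1) (hneg : χ (-1) = 1) : gaussSum χ ψ ^ 2 = Fintype.card R := by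
  have hinv : χ ^ p ^ n = χ⁻¹ := eq_inv_of_mul_eq_one_left (by rw [← pow_succ, hχ])
  have hinv_neg : χ⁻¹ (-1) = 1 := by
    rw [MulChar.inv_apply_eq_inv, hneg, Ring.inverse_one]
  rw [← gaussSum_mul_gaussSum_eq_card hχ1 hψ, sq]
  congr 1
  rw [← one_mul (gaussSum χ⁻¹ ψ⁻¹), ← hinv_neg, mul_gaussSum_inv_eq_gaussSum, ← hinv,
    gaussSum_pow_prime_pow hfrob]

variable {F : Type*} [Field F] [Fintype F] {χ : MulChar F ℂ} {ψ : AddChar F ℂ}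

theorem gaussSum_pow_eq_of_semiprimitive (p : ℕ) [Fact p.Prime] [CharP F p] {n : ℕ}
    (hψ : ψ ≠ 1) (hχ1 : χ ≠ 1) (hχ : χ ^ (p ^ n + 1) = 1) (hneg : χ (-1) = 1) :
    gaussSum χ ψ ^ (2 * (p ^ n + 1)) = Fintype.card F ^ (p ^ n + 1) := by
  obtain ⟨ψ₀, hprim, hfrob⟩ := exists_isPrimitive_addChar_frobenius_invariant p F
  obtain ⟨a, rfl⟩ := exists_eq_mulShift_of_isPrimitive hprim hψ
  have hunit : χ⁻¹ a ^ (p ^ n + 1) = 1 := by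
    rw [← MulChar.pow_apply_coe, inv_pow, hχ, inv_one, MulChar.one_apply_coe]
  rw [gaussSum_mulShift_eq, mul_pow, mul_comm 2, pow_mul, hunit, one_pow, one_mul, mul_comm,
    pow_mul, gaussSum_sq_of_semiprimitive hprim hfrob hχ1 hχ hneg]

theorem exists_int_sum_gaussSum_pow_eq_mul (p : ℕ) [Fact p.Prime] [CharP F p] {n : ℕ} {u : ℤ}
    (hχ : orderOf χ ∣ p ^ n + 1) (hneg : χ (-1) = 1) (hcard : (Fintype.card F : ℤ) = u ^ 2)
    (hψ : ψ ≠ 1)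
    (hint : ∃ m : ℤ, ∑ i ∈ Finset.range (orderOf χ - 1), gaussSum (χ ^ (i + 1)) ψ = m) :
    ∃ m : ℤ, ∑ i ∈ Finset.range (orderOf χ - 1), gaussSum (χ ^ (i + 1)) ψ = u * m ∧
      |m| < orderOf χ := by
  obtain ⟨b, hb⟩ := hint
  have hcardC : (Fintype.card F : ℂ) = (u : ℂ) ^ 2 := by exact_mod_cast hcard
  have hu : (u : ℂ) ≠ 0 := fun hu => by simp [hu] at hcardC
  have hroot (i : ℕ) (hi : i ∈ Finset.range (orderOf χ - 1)) :
      (gaussSum (χ ^ (i + 1)) ψ / u) ^ (2 * (p ^ n + 1)) = 1 := by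
    have hne : χ ^ (i + 1) ≠ 1 :=
      pow_ne_one_of_lt_orderOf i.succ_ne_zero (Nat.add_lt_of_lt_sub (Finset.mem_range.1 hi))
    have hpow : (χ ^ (i + 1)) ^ (p ^ n + 1) = 1 := by
      rw [pow_right_comm, orderOf_dvd_iff_pow_eq_one.1 hχ, one_pow]
    have hneg_pow : (χ ^ (i + 1)) (-1) = 1 := by
      rw [MulChar.pow_apply' χ i.succ_ne_zero, hneg, one_pow]
    rw [div_pow, gaussSum_pow_eq_of_semiprimitive p hψ hne hpow hneg_pow, hcardC, ← pow_mul,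
      div_self (pow_ne_zero _ hu)]
  have hsum : ∑ i ∈ Finset.range (orderOf χ - 1), gaussSum (χ ^ (i + 1)) ψ / u = b / u := by
    rw [← Finset.sum_div, hb]
  obtain ⟨m, hm, hbound⟩ := exists_int_eq_sum_of_pow_eq_one
    (mul_ne_zero two_ne_zero (p ^ n).succ_ne_zero) hroot ⟨b / u, by rw [hsum]; push_cast; rfl⟩
  refine ⟨m, ?_, hbound.trans_lt ?_⟩
  · rw [hb, mul_comm, ← div_eq_iff hu, ← hsum, hm]
  · rw [Finset.card_range]
    exact_mod_cast Nat.sub_lt χ.orderOf_pos one_pos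

theorem eq_or_eq_of_mul_eq_mul_add_one {N u ε c n η : ℤ} (hε : ε = 1 ∨ ε = -1)
    (hc : N * c = u - ε) (hn : |n| < N) (hη : u * n = N * η + 1) :
    η = ε * c ∨ η = ε * c - ε * u := by
  have hε2 : ε ^ 2 = 1 := sq_eq_one_iff.2 hε
  have hN : 0 < N := (abs_nonneg n).trans_lt hn
  obtain ⟨t, rfl⟩ : ∃ t, n = ε + N * t :=
    ⟨ε * (η - c * n), by linear_combination ε * hη + ε * n * hc - n * hε2⟩
  have hηt : η = ε * c + u * t :=
    mul_left_cancel₀ hN.ne' (by linear_combination -hη - ε * hc + hε2)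
  obtain ⟨hlo, hhi⟩ := abs_lt.1 hn
  have ht : t = 0 ∨ t = -ε := by
    rcases hε with rfl | rfl
    · have : -2 < t := by nlinarith
      have : t < 1 := by nlinarith
      omega
    · have : -1 < t := by nlinarith
      have : t < 2 := by nlinarith
      omega
  rcases ht with rfl | rfl
  · exact .inl (by rw [hηt, mul_zero, add_zero])
  · exact .inr (by rw [hηt]; ring)

theorem sum_charKernel_eq_or {K : Type*} [Field K] [Finite K] [Algebra K F] {p n : ℕ}
    [Fact p.Prime] [CharP F p]
    (hχ : orderOf χ ∣ p ^ n + 1) (hdvd : Nat.card Kˣ * orderOf χ ∣ Nat.card Fˣ)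
    {u ε c : ℤ} (hcard : (Fintype.card F : ℤ) = u ^ 2) (hε : ε = 1 ∨ ε = -1)
    (hc : orderOf χ * c = u - ε) (hψ : ψ ≠ 1) :
    ∑ x ∈ charKernel χ, ψ x = (ε * c : ℤ) ∨ ∑ x ∈ charKernel χ, ψ x = (ε * c - ε * u : ℤ) := by
  have hneg : χ (-1) = 1 := mem_charKernel.1 (neg_one_mem_charKernel hdvd)
  obtain ⟨η, hη⟩ := exists_int_sum_charKernel hdvd ψ
  have hsum : ∑ i ∈ Finset.range (orderOf χ - 1), gaussSum (χ ^ (i + 1)) ψ =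
      (orderOf χ * η + 1 : ℤ) := by
    push_cast
    rw [← hη, orderOf_mul_sum_charKernel_of_ne_one χ hψ, sub_add_cancel]
  obtain ⟨m, hm, hlt⟩ := exists_int_sum_gaussSum_pow_eq_mul p hχ hneg hcard hψ ⟨_, hsum⟩
  have hum : u * m = orderOf χ * η + 1 := by exact_mod_cast hm.symm.trans hsum
  rw [hη]
  exact_mod_cast eq_or_eq_of_mul_eq_mul_add_one hε hc hlt hum

end GaussSum

section StronglyRegular

variable {V : Type*} [AddCommGroup V] {D : Finset V}

-- Fourier inversion at `w` of `ψ ↦ (ψ(D) - r) * (ψ(D) - t)`, which is supported at `ψ = 1`.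
theorem card_mul_card_filter_sub_mem_of_sum_addChar_eq_or [Fintype V] {r t : ℂ}
    (h : ∀ ψ : AddChar V ℂ, ψ ≠ 1 → ∑ d ∈ D, ψ d = r ∨ ∑ d ∈ D, ψ d = t) {w : V} (hw : w ≠ 0) :
    Fintype.card V * ((D.filter fun d => w - d ∈ D).card - (r + t) * if w ∈ D then 1 else 0) =
      (D.card - r) * (D.card - t) := by
  have hpoint : ∑ ψ : AddChar V ℂ, ψ (-w) = 0 := by
    rw [AddChar.sum_apply_eq_ite, if_neg (neg_ne_zero.2 hw)]
  have hlin : ∑ ψ : AddChar V ℂ, (∑ d ∈ D, ψ d) * ψ (-w) =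
      Fintype.card V * if w ∈ D then 1 else 0 := by
    simp_rw [Finset.sum_mul, ← AddChar.map_add_eq_mul]
    rw [Finset.sum_comm]
    simp [AddChar.sum_apply_eq_ite, add_neg_eq_zero]
  have hquad : ∑ ψ : AddChar V ℂ, (∑ d ∈ D, ψ d) ^ 2 * ψ (-w) =
      Fintype.card V * (D.filter fun d => w - d ∈ D).card := by
    have hsolve (d e : V) : d + e + -w = 0 ↔ e = w - d := by
      rw [add_neg_eq_zero, eq_sub_iff_add_eq']
    simp_rw [sq, Finset.sum_mul_sum, Finset.sum_mul, ← AddChar.map_add_eq_mul]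
    rw [Finset.sum_comm]
    simp_rw [Finset.sum_comm (s := Finset.univ), AddChar.sum_apply_eq_ite, hsolve,
      Finset.sum_ite_eq', ← Finset.sum_filter, Finset.sum_const, nsmul_eq_mul, mul_comm]
  calc _ = ∑ ψ : AddChar V ℂ, (∑ d ∈ D, ψ d - r) * (∑ d ∈ D, ψ d - t) * ψ (-w) := by
        have hexpand (ψ : AddChar V ℂ) : (∑ d ∈ D, ψ d - r) * (∑ d ∈ D, ψ d - t) * ψ (-w) =
            (∑ d ∈ D, ψ d) ^ 2 * ψ (-w) - (r + t) * ((∑ d ∈ D, ψ d) * ψ (-w)) +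
              r * t * ψ (-w) := by ring
        simp_rw [hexpand, Finset.sum_add_distrib, Finset.sum_sub_distrib, ← Finset.mul_sum, hquad,
          hlin, hpoint]
        ring
    _ = (D.card - r) * (D.card - t) := by
        rw [Finset.sum_eq_single 1 (fun ψ _ hψ => by rcases h ψ hψ with h | h <;> simp [h])
          (by simp)]
        simp

open SimpleGraph

theorem circulantGraph_adj_iff_sub_mem (h0 : 0 ∉ D) (hneg : ∀ d ∈ D, -d ∈ D) {x y : V} :
    (circulantGraph (D : Set V)).Adj x y ↔ x - y ∈ D := by
  rw [circulantGraph_adj]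
  constructor
  · rintro ⟨-, h | h⟩
    · exact h
    · exact neg_sub y x ▸ hneg _ h
  · intro h
    exact ⟨fun hxy => h0 (by rwa [hxy, sub_self] at h), .inl h⟩

variable [Fintype V]

theorem degree_circulantGraph (h0 : 0 ∉ D) (hneg : ∀ d ∈ D, -d ∈ D)
    [DecidableRel (circulantGraph (D : Set V)).Adj] (v : V) :
    (circulantGraph (D : Set V)).degree v = D.card := by
  rw [← card_neighborFinset_eq_degree]
  refine Finset.card_nbij' (v - ·) (v - ·) (fun z hz => ?_) (fun d hd => ?_)
    (fun _ _ => sub_sub_cancel v _) fun _ _ => sub_sub_cancel v _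
  · rwa [Finset.mem_coe, mem_neighborFinset, circulantGraph_adj_iff_sub_mem h0 hneg] at hz
  · rwa [Finset.mem_coe, mem_neighborFinset, circulantGraph_adj_iff_sub_mem h0 hneg, sub_sub_cancel]

theorem card_commonNeighbors_circulantGraph (h0 : 0 ∉ D) (hneg : ∀ d ∈ D, -d ∈ D)
    [DecidableRel (circulantGraph (D : Set V)).Adj] (v w : V) :
    Fintype.card ((circulantGraph (D : Set V)).commonNeighbors v w) =
      (D.filter fun d => v - w - d ∈ D).card := by
  rw [← Set.toFinset_card]
  refine Finset.card_nbij' (v - ·) (v - ·) (fun z hz => ?_) (fun d hd => ?_)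
    (fun _ _ => sub_sub_cancel v _) fun _ _ => sub_sub_cancel v _
  · rw [Set.coe_toFinset, mem_commonNeighbors, circulantGraph_adj_iff_sub_mem h0 hneg,
      circulantGraph_adj_iff_sub_mem h0 hneg] at hz
    rw [Finset.mem_coe, Finset.mem_filter, sub_sub_sub_cancel_left, ← neg_sub]
    exact ⟨hz.1, hneg _ hz.2⟩
  · rw [Finset.mem_coe, Finset.mem_filter, sub_right_comm] at hd
    rw [Set.coe_toFinset, mem_commonNeighbors, circulantGraph_adj_iff_sub_mem h0 hneg,
      circulantGraph_adj_iff_sub_mem h0 hneg, sub_sub_cancel, ← neg_sub]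
    exact ⟨hd.1, hneg _ hd.2⟩

theorem isSRGWith_circulantGraph (h0 : 0 ∉ D) (hneg : ∀ d ∈ D, -d ∈ D)
    [DecidableRel (circulantGraph (D : Set V)).Adj] {ℓ μ : ℕ}
    (hℓ : ∀ w ∈ D, (D.filter fun d => w - d ∈ D).card = ℓ)
    (hμ : ∀ w ∉ D, w ≠ 0 → (D.filter fun d => w - d ∈ D).card = μ) :
    (circulantGraph (D : Set V)).IsSRGWith (Fintype.card V) D.card ℓ μ where
  card := rfl
  regular := degree_circulantGraph h0 hneg
  of_adj v w h := by
    rw [card_commonNeighbors_circulantGraph h0 hneg]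
    exact hℓ _ ((circulantGraph_adj_iff_sub_mem h0 hneg).1 h)
  of_not_adj v w hvw h := by
    rw [card_commonNeighbors_circulantGraph h0 hneg]
    exact hμ _ (fun hmem => h ((circulantGraph_adj_iff_sub_mem h0 hneg).2 hmem)) (sub_ne_zero.2 hvw)

theorem exists_isSRGWith_circulantGraph_of_sum_addChar (h0 : 0 ∉ D) (hneg : ∀ d ∈ D, -d ∈ D)
    [DecidableRel (circulantGraph (D : Set V)).Adj] (hD : D.Nonempty) {r t : ℤ} {μ : ℕ}
    (h : ∀ ψ : AddChar V ℂ, ψ ≠ 1 → ∑ d ∈ D, ψ d = r ∨ ∑ d ∈ D, ψ d = t)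
    (hμ : (Fintype.card V : ℤ) * μ = (D.card - r) * (D.card - t)) :
    ∃ ℓ : ℕ, (circulantGraph (D : Set V)).IsSRGWith (Fintype.card V) D.card ℓ μ ∧
      (ℓ : ℤ) = μ + r + t := by
  have hcount (w : V) (hw : w ≠ 0) : ((D.filter fun d => w - d ∈ D).card : ℤ) =
      μ + (r + t) * if w ∈ D then 1 else 0 := by
    have hV : (Fintype.card V : ℤ) ≠ 0 := Nat.cast_ne_zero.2 Fintype.card_ne_zero
    have hC : (Fintype.card V : ℤ) *
        ((D.filter fun d => w - d ∈ D).card - (r + t) * if w ∈ D then 1 else 0) =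
          (D.card - r) * (D.card - t) := by
      exact_mod_cast card_mul_card_filter_sub_mem_of_sum_addChar_eq_or h hw
    exact sub_eq_iff_eq_add.1 (mul_left_cancel₀ hV (hC.trans hμ.symm))
  have hcount_mem (w : V) (hw : w ∈ D) :
      ((D.filter fun d => w - d ∈ D).card : ℤ) = μ + r + t := by
    rw [hcount w fun hw0 => h0 (hw0 ▸ hw), if_pos hw, mul_one, add_assoc]
  obtain ⟨w, hw⟩ := hD
  refine ⟨_, isSRGWith_circulantGraph h0 hneg (fun v hv => ?_) fun v hv hv0 => ?_,
    hcount_mem w hw⟩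
  · exact_mod_cast (hcount_mem v hv).trans (hcount_mem w hw).symm
  · have := hcount v hv0
    rw [if_neg hv, mul_zero, add_zero] at this
    exact_mod_cast this

end StronglyRegular

section CyclotomicClass

theorem exists_isSRGWith_charKernel {F K : Type*} [Field F] [Fintype F] [Field K] [Finite K]
    [Algebra K F] {p n : ℕ} [Fact p.Prime] [CharP F p] {χ : MulChar F ℂ}
    [DecidableRel (SimpleGraph.circulantGraph (charKernel χ : Set F)).Adj]
    (hχ : orderOf χ ∣ p ^ n + 1) (hdvd : Nat.card Kˣ * orderOf χ ∣ Nat.card Fˣ)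
    {u ε c : ℤ} (hcard : (Fintype.card F : ℤ) = u ^ 2) (hε : ε = 1 ∨ ε = -1)
    (hc : orderOf χ * c = u - ε) :
    ∃ k l μ : ℕ,
      (SimpleGraph.circulantGraph (charKernel χ : Set F)).IsSRGWith (Fintype.card F) k l μ ∧
      (k : ℤ) = c * (u + ε) ∧
      (l : ℤ) = -ε * u + c ^ 2 + 3 * ε * c ∧
      (μ : ℤ) = c ^ 2 + ε * c := by
  have hε2 : ε ^ 2 = 1 := sq_eq_one_iff.2 hε
  have hk : ((charKernel χ).card : ℤ) = c * (u + ε) := by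
    have hunits : (orderOf χ * (charKernel χ).card + 1 : ℤ) = u ^ 2 := by
      rw [← hcard, Fintype.card_eq_card_units_add_one, ← Nat.card_eq_fintype_card,
        ← orderOf_mul_card_charKernel χ]
      push_cast; rfl
    exact mul_left_cancel₀ (Nat.cast_ne_zero.2 χ.orderOf_pos.ne')
      (by linear_combination hunits - (u + ε) * hc + hε2)
  obtain ⟨μ, hμ⟩ : ∃ μ : ℕ, c ^ 2 + ε * c = μ := Int.eq_ofNat_of_zero_le <| by
    rcases hε with rfl | rfl
    · rcases le_or_gt 0 c with h | h <;> nlinarith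
    · rcases le_or_gt 1 c with h | h <;> nlinarith
  have h0 : 0 ∉ charKernel χ := by
    rw [mem_charKernel, χ.map_zero]
    exact zero_ne_one
  have hneg : ∀ d ∈ charKernel χ, -d ∈ charKernel χ := fun d hd => by
    rw [mem_charKernel, ← neg_one_mul, map_mul, mem_charKernel.1 (neg_one_mem_charKernel hdvd),
      mem_charKernel.1 hd, one_mul]
  obtain ⟨l, hsrg, hl⟩ := exists_isSRGWith_circulantGraph_of_sum_addChar (μ := μ) h0 hneg
    ⟨1, mem_charKernel.2 χ.map_one⟩
    (fun ψ hψ => sum_charKernel_eq_or hχ hdvd hcard hε hc hψ)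
    (by rw [hcard, hk, ← hμ]; ring)
  exact ⟨_, l, μ, hsrg, hk, by rw [hl, ← hμ]; ring, hμ.symm⟩

theorem ne_zero_of_forall_eq_pow {F : Type*} [Field F] [Fintype F] {ω : F}
    (hF : 2 < Fintype.card F) (hω : ∀ x : F, x ≠ 0 → ∃ k : ℕ, x = ω ^ k) : ω ≠ 0 := by
  rintro rfl
  refine hF.not_ge (Finset.card_le_two.trans' (Finset.card_le_card (t := {0, 1}) fun x _ => ?_))
  rw [Finset.mem_insert, Finset.mem_singleton, or_iff_not_imp_left]
  intro hx
  obtain ⟨k, rfl⟩ := hω x hx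
  rw [zero_pow_eq] at hx ⊢
  exact if_pos (by_contra fun hk => hx (if_neg hk))

theorem exists_mulChar_charKernel_eq_cycl {F : Type*} [Field F] [Fintype F] {ω : F} (hω0 : ω ≠ 0)
    (hω : ∀ x : F, x ≠ 0 → ∃ k : ℕ, x = ω ^ k) {N : ℕ} (hN : N ∣ Nat.card Fˣ) :
    ∃ χ : MulChar F ℂ, orderOf χ = N ∧ charKernel χ = cycl ω N 0 := by
  have hN0 : N ≠ 0 := ne_zero_of_dvd_ne_zero Nat.card_pos.ne' hN
  have hprim := Complex.isPrimitiveRoot_exp N hN0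
  set ζ := Complex.exp (2 * Real.pi * Complex.I / N)
  let g : Fˣ := Units.mk0 ω hω0
  have hg (x : Fˣ) : x ∈ Subgroup.zpowers g := by
    obtain ⟨k, hk⟩ := hω x x.ne_zero
    exact ⟨k, Units.ext (by simp [g, hk])⟩
  let ζ' : ℂˣ := Units.mk0 ζ (hprim.ne_zero hN0)
  have hζ' : ζ' ∈ rootsOfUnity (Fintype.card Fˣ) ℂ := by
    rw [mem_rootsOfUnity', ← Nat.card_eq_fintype_card]
    exact (hprim.pow_eq_one_iff_dvd _).2 hN
  let χ := MulChar.ofRootOfUnity hζ' hg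
  have hχω : χ ω = ζ := MulChar.ofRootOfUnity_spec hζ' hg
  refine ⟨χ, ?_, ?_⟩
  · rw [hprim.eq_orderOf]
    refine orderOf_eq_orderOf_iff.2 fun n => ?_
    rw [MulChar.eq_iff hg, MulChar.pow_apply_coe, MulChar.one_apply_coe]
    exact hχω ▸ Iff.rfl
  · ext x
    rw [mem_charKernel]
    simp only [cycl, Finset.mem_filter, Finset.mem_univ, true_and, zero_add]
    constructor
    · intro hx
      obtain ⟨i, rfl⟩ := hω x fun hx0 => zero_ne_one (χ.map_zero.symm.trans (hx0 ▸ hx))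
      rw [map_pow, hχω, hprim.pow_eq_one_iff_dvd] at hx
      obtain ⟨k, rfl⟩ := hx
      exact ⟨k, rfl⟩
    · rintro ⟨k, rfl⟩
      rw [map_pow, hχω, pow_mul, hprim.pow_eq_one, one_pow]

theorem sub_one_mul_dvd_pow_sub_one {a j N : ℕ} (h : N ∣ a ^ j + 1) (s : ℕ) :
    (a - 1) * N ∣ a ^ (2 * j * s) - 1 := by
  have hsub : a - 1 ∣ a ^ j - 1 := by simpa using Nat.sub_dvd_pow_sub_pow a 1 j
  calc (a - 1) * N ∣ (a ^ j - 1) * (a ^ j + 1) := mul_dvd_mul hsub h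
    _ = (a ^ j) ^ 2 - 1 ^ 2 := by rw [Nat.sq_sub_sq, mul_comm]
    _ ∣ a ^ (2 * j * s) - 1 := by
      rw [one_pow, mul_comm 2, pow_mul, pow_mul]
      simpa using Nat.sub_dvd_pow_sub_pow ((a ^ j) ^ 2) 1 s

end CyclotomicClass

theorem stmt_6_general (p : ℕ) [Fact p.Prime] (N : ℕ) (j : ℕ) (hpj : (p : ZMod N) ^ j = -1)
    (s : ℕ) (f : ℕ) (hf : f = 2 * j * s)
    {F : Type*} [Field F] [Fintype F] (hcard : Fintype.card F = p ^ f)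
    (ω : F) (hω : ∀ x : F, x ≠ 0 → ∃ k : ℕ, x = ω ^ k)
    (u ε c : ℤ) (hu : u = (p : ℤ) ^ (j * s)) (hε : ε = (-1 : ℤ) ^ s)
    (hc : (N : ℤ) * c = u - ε) :
    ∃ k l μ : ℕ,
      (SimpleGraph.fromRel fun x y : F => x - y ∈ cycl ω N 0).IsSRGWith
        (Fintype.card F) k l μ ∧
      (k : ℤ) = c * (u + ε) ∧
      (l : ℤ) = -ε * u + c ^ 2 + 3 * ε * c ∧
      (μ : ℤ) = c ^ 2 + ε * c := by
  subst hf
  have : CharP F p := charP_of_card_eq_prime_pow hcard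
  let _ : Algebra (ZMod p) F := ZMod.algebra F p
  have hcard_sq : Fintype.card F = (p ^ (j * s)) ^ 2 := by rw [hcard]; ring
  have hNdvd : N ∣ p ^ j + 1 := by
    rw [← ZMod.natCast_eq_zero_iff]; push_cast; rw [hpj, neg_add_cancel]
  have hdvd : Nat.card (ZMod p)ˣ * N ∣ Nat.card Fˣ := by
    rw [Nat.card_eq_fintype_card (α := (ZMod p)ˣ), ZMod.card_units, Nat.card_units,
      Nat.card_eq_fintype_card, hcard]
    exact sub_one_mul_dvd_pow_sub_one hNdvd s
  have hF : 2 < Fintype.card F := by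
    have hone := Fintype.one_lt_card (α := F)
    rw [hcard_sq] at hone ⊢
    have hone_lt : 1 < p ^ (j * s) := (one_lt_sq_iff₀ (Nat.zero_le _)).1 hone
    nlinarith
  obtain ⟨χ, rfl, hker⟩ := exists_mulChar_charKernel_eq_cycl (ne_zero_of_forall_eq_pow hF hω) hω
    ((dvd_mul_left N _).trans hdvd)
  rw [← hker]
  exact exists_isSRGWith_charKernel hNdvd hdvd (by rw [hcard_sq, hu]; push_cast; rfl)
    (hε ▸ neg_one_pow_eq_or ℤ s) hc

theorem stmt_6 (p : ℕ) [Fact p.Prime] (N : ℕ) (hN : 2 < N)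
    (j : ℕ) (hj : 0 < j) (hpj : (p : ZMod N) ^ j = -1)
    (hmin : ∀ j' : ℕ, 0 < j' → j' < j → (p : ZMod N) ^ j' ≠ -1)
    (s : ℕ) (hs : 0 < s) (f : ℕ) (hf : f = 2 * j * s)
    {F : Type*} [Field F] [Fintype F] (hcard : Fintype.card F = p ^ f)
    (ω : F) (hω : ∀ x : F, x ≠ 0 → ∃ k : ℕ, x = ω ^ k)
    (u ε c : ℤ) (hu : u = (p : ℤ) ^ (j * s)) (hε : ε = (-1 : ℤ) ^ s)
    (hc : (N : ℤ) * c = u - ε) :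
    ∃ k l μ : ℕ,
      (SimpleGraph.fromRel fun x y : F => x - y ∈ cycl ω N 0).IsSRGWith
        (Fintype.card F) k l μ ∧
      (k : ℤ) = c * (u + ε) ∧
      (l : ℤ) = -ε * u + c ^ 2 + 3 * ε * c ∧
      (μ : ℤ) = c ^ 2 + ε * c := by
  exact stmt_6_general p N j hpj s f hf hcard ω hω u ε c hu hε hc
end
end

section
/- Let m be a positive integer and q₁,…,q_s prime powers with 2m | q_i+1 for all i. Let G = G₁ × ⋯ × G_s with G_i elementary abelian of order q_i⁴, and u = q₁²⋯q_s². Then there exists a strongly regular Cayley graph on G with negative Latin square type parameters (u², c(u+1), −u+c²+3c, c²+c) where c = (u−1)/m; moreover G∖{0} can be partitioned into m such connection sets, and any union of i of them (1 ≤ i ≤ m) is again a partial difference set with c = i(u−1)/m. -/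
open scoped Classical

/-!
Identify each factor with a quadratic extension `L` of a field `K` of order `q²`, itself quadratic
over a field of order `q`. As `2m ∣ q + 1`, a multiplicative character of `L` of order `2m` lifted
from `K` through the norm has all its Gauss sums equal to `-q²`, by Stickelberger's theorem for `K`
and the Hasse–Davenport relation for `L / K`. The nonzero elements of `L` fall into two classes,
according to the value `±1` of the `m`-th power of the character. Restricted to one class, the
character becomes a function whose powers have Fourier transforms `-q²` times the powers of a
function of the same kind. Suitable functions that are constant on the punctured `K`-lines of one
class and equal to `1` at `0` have the same property with the weight `q²`, and the duality exchanges
their classes.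

Together these functions form a building block. Building blocks multiply: on a product of groups,
combining restricted characters and line functions crosswise gives functions of the same kind, and
the weights `-u` and `u` multiply. For the final block, the sum of the two restricted characters
takes `m`-th roots of unity as values off `0`, and finite Fourier inversion shows that every union
of its fibres has only the two nontrivial character values `c` and `c - u`, which characterises
the negative Latin square parameters.
-/

section CharSum

variable {G : Type*} [AddCommGroup G] [Fintype G]

/-- The Fourier coefficient of `f : G → ℂ` at the character `ψ`. The character is not conjugated. -/
noncomputable def charSum (f : G → ℂ) (ψ : AddChar G ℂ) : ℂ :=
  ∑ x, f x * ψ x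

theorem sum_charSum_mul_apply_neg (f : G → ℂ) (z : G) :
    ∑ ψ, charSum f ψ * ψ (-z) = Fintype.card G * f z := by
  have orthogonality (x : G) : ∑ ψ : AddChar G ℂ, f x * ψ x * ψ (-z) =
      if x = z then f x * Fintype.card G else 0 := by
    simp_rw [mul_assoc, ← AddChar.map_add_eq_mul, ← Finset.mul_sum, AddChar.sum_apply_eq_ite,
      ← sub_eq_add_neg, sub_eq_zero, mul_ite, mul_zero]
  simp_rw [charSum, Finset.sum_mul]
  rw [Finset.sum_comm, Finset.sum_congr rfl fun x _ => orthogonality x]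
  simp [mul_comm]

theorem charSum_injective : Function.Injective (charSum (G := G)) := by
  intro f g hfg
  ext z
  have hcard : (Fintype.card G : ℂ) ≠ 0 := Nat.cast_ne_zero.2 Fintype.card_ne_zero
  apply mul_left_cancel₀ hcard
  rw [← sum_charSum_mul_apply_neg f, hfg, sum_charSum_mul_apply_neg]

theorem charSum_convolution (f g : G → ℂ) (ψ : AddChar G ℂ) :
    charSum (fun z => ∑ x, f x * g (z - x)) ψ = charSum f ψ * charSum g ψ := by
  simp_rw [charSum, Finset.sum_mul_sum, Finset.sum_mul]
  rw [Finset.sum_comm]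
  refine Finset.sum_congr rfl fun x _ => Fintype.sum_equiv (Equiv.subRight x) _ _ fun z => ?_
  have hz : ψ z = ψ x * ψ (z - x) := by rw [← AddChar.map_add_eq_mul, add_sub_cancel]
  rw [Equiv.subRight_apply, hz]
  ring

theorem charSum_one (ψ : AddChar G ℂ) :
    charSum 1 ψ = if ψ = 0 then (Fintype.card G : ℂ) else 0 := by
  simp [charSum, AddChar.sum_eq_ite]

theorem charSum_single_zero [DecidableEq G] (ψ : AddChar G ℂ) :
    charSum (Pi.single 0 1) ψ = 1 := by
  simp [charSum, Pi.single_apply]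

theorem charSum_ite_mem [DecidableEq G] (D : Finset G) (ψ : AddChar G ℂ) :
    charSum (fun x => if x ∈ D then 1 else 0) ψ = ∑ x ∈ D, ψ x := by
  simp [charSum]

end CharSum

section PartialDifferenceSet

variable {G : Type*} [AddCommGroup G] [DecidableEq G]

/-- `D` is a partial difference set of the finite abelian group `G`, in combinatorial form: the
number of ways of writing a nonzero `z` as a sum (equivalently, as `-D = D`, a difference) of two
elements of `D` is `l` if `z ∈ D` and `μ` otherwise. -/
structure IsPartialDifferenceSet (D : Finset G) (l μ : ℕ) : Prop where
  zero_notMem : (0 : G) ∉ D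
  neg_mem : ∀ g ∈ D, -g ∈ D
  card_filter_sub_mem : ∀ z ≠ 0, {x ∈ D | z - x ∈ D}.card = if z ∈ D then l else μ

namespace IsPartialDifferenceSet

variable {D : Finset G} {l μ : ℕ}

theorem neg_mem_iff (hD : IsPartialDifferenceSet D l μ) {g : G} : -g ∈ D ↔ g ∈ D :=
  ⟨fun hg => neg_neg g ▸ hD.neg_mem _ hg, hD.neg_mem g⟩

theorem adj_iff (hD : IsPartialDifferenceSet D l μ) (v w : G) :
    (SimpleGraph.fromRel fun a b : G => a - b ∈ D).Adj v w ↔ v - w ∈ D := by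
  rw [SimpleGraph.fromRel_adj, ← neg_sub v w, hD.neg_mem_iff, or_self, and_iff_right_iff_imp]
  rintro hvw rfl
  exact hD.zero_notMem (sub_self v ▸ hvw)

theorem isSRGWith [Fintype G] (hD : IsPartialDifferenceSet D l μ) {Γ : SimpleGraph G}
    [DecidableRel Γ.Adj] (hΓ : ∀ v w, Γ.Adj v w ↔ v - w ∈ D) :
    Γ.IsSRGWith (Fintype.card G) D.card l μ := by
  have common (v w : G) :
      Fintype.card (Γ.commonNeighbors v w) = {x ∈ D | v - w - x ∈ D}.card := by
    rw [← Set.toFinset_card]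
    refine Finset.card_equiv (Equiv.subLeft v) fun y => ?_
    have hy : v - w - (v - y) = -(w - y) := by abel
    simp only [Set.mem_toFinset, SimpleGraph.mem_commonNeighbors, hΓ, Equiv.subLeft_apply,
      Finset.mem_filter, hy, hD.neg_mem_iff]
  refine ⟨rfl, fun v => ?_, fun v w hvw => ?_, fun v w hne hvw => ?_⟩
  · rw [← SimpleGraph.card_neighborFinset_eq_degree]
    exact Finset.card_equiv (Equiv.subLeft v) fun y => by simp [hΓ]
  · rw [common, hD.card_filter_sub_mem _ (sub_ne_zero.2 hvw.ne), if_pos ((hΓ v w).1 hvw)]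
  · rw [common, hD.card_filter_sub_mem _ (sub_ne_zero.2 hne), if_neg (mt (hΓ v w).2 hvw)]

end IsPartialDifferenceSet

variable [Fintype G]

theorem card_filter_sub_mem_of_sq_charSum {D : Finset G} {a b μ : ℂ}
    (hD : ∀ ψ : AddChar G ℂ, (∑ x ∈ D, ψ x) ^ 2 =
      a + b * ∑ x ∈ D, ψ x + μ * if ψ = 0 then (Fintype.card G : ℂ) else 0) (z : G) :
    ({x ∈ D | z - x ∈ D}.card : ℂ) =
      a * Pi.single (M := fun _ : G => ℂ) 0 1 z + b * (if z ∈ D then 1 else 0) + μ := by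
  set d : G → ℂ := fun x => if x ∈ D then 1 else 0 with hd
  have hconv : (fun z => ∑ x, d x * d (z - x)) =
      fun z => a * Pi.single (M := fun _ : G => ℂ) 0 1 z + b * d z + μ * 1 := by
    apply charSum_injective
    ext ψ
    have linear : charSum (fun z => a * Pi.single (M := fun _ : G => ℂ) 0 1 z + b * d z + μ * 1) ψ
        = a * charSum (Pi.single 0 1) ψ + b * charSum d ψ + μ * charSum 1 ψ := by
      simp only [charSum, add_mul, mul_assoc, Finset.sum_add_distrib, Finset.mul_sum, Pi.one_apply]
    rw [charSum_convolution, linear, charSum_single_zero, charSum_one, hd, charSum_ite_mem, ← sq,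
      hD, mul_one]
  have hcount : ({x ∈ D | z - x ∈ D}.card : ℂ) = ∑ x, d x * d (z - x) := by
    simp only [hd, ite_mul, one_mul, zero_mul, Finset.sum_ite_mem, Finset.univ_inter,
      Finset.sum_boole]
  rw [hcount, congrFun hconv z, mul_one]

/-- The negative Latin square parameters are those of a set of size `c(u + 1)` whose nontrivial
character values are `c` and `c - u`. -/
theorem exists_isPartialDifferenceSet_of_charSum {D : Finset G} {u : ℕ} {c : ℤ} (hc : 0 < c)
    (hG : Fintype.card G = u ^ 2) (hzero : (0 : G) ∉ D) (hneg : ∀ g ∈ D, -g ∈ D)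
    (hcard : (D.card : ℤ) = c * (u + 1))
    (hchar : ∀ ψ : AddChar G ℂ, ψ ≠ 0 → ∑ x ∈ D, ψ x = c ∨ ∑ x ∈ D, ψ x = c - u) :
    ∃ l μ : ℕ, IsPartialDifferenceSet D l μ ∧ (l : ℤ) = -u + c ^ 2 + 3 * c ∧
      (μ : ℤ) = c ^ 2 + c := by
  have count : ∀ z, ({x ∈ D | z - x ∈ D}.card : ℂ) =
      c * (u - c) * Pi.single (M := fun _ : G => ℂ) 0 1 z +
        (2 * c - u) * (if z ∈ D then 1 else 0) + (c ^ 2 + c) := by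
    refine card_filter_sub_mem_of_sq_charSum fun ψ => ?_
    by_cases hψ : ψ = 0
    · have hcard' : (D.card : ℂ) = c * (u + 1) := by exact_mod_cast hcard
      simp only [hψ, AddChar.zero_apply, Finset.sum_const, nsmul_one, hcard', if_true, hG]
      push_cast
      ring
    · rcases hchar ψ hψ with h | h <;> rw [h, if_neg hψ] <;> ring
  have count_of_mem (z : G) (hz : z ∈ D) :
      ({x ∈ D | z - x ∈ D}.card : ℤ) = -u + c ^ 2 + 3 * c := by
    have h := count z
    rw [Pi.single_eq_of_ne (ne_of_mem_of_not_mem hz hzero), if_pos hz] at h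
    have h' : ({x ∈ D | z - x ∈ D}.card : ℂ) = -u + c ^ 2 + 3 * c := by rw [h]; ring
    exact_mod_cast h'
  have count_of_notMem (z : G) (hz : z ≠ 0) (hzD : z ∉ D) :
      ({x ∈ D | z - x ∈ D}.card : ℤ) = c ^ 2 + c := by
    have h := count z
    rw [Pi.single_eq_of_ne hz, if_neg hzD, mul_zero, mul_zero, zero_add, zero_add] at h
    exact_mod_cast h
  obtain ⟨z₀, hz₀⟩ : D.Nonempty := by
    rw [← Finset.card_pos]
    zify
    rw [hcard]
    positivity
  refine ⟨{x ∈ D | z₀ - x ∈ D}.card, (c ^ 2 + c).toNat, ⟨hzero, hneg, fun z hz => ?_⟩,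
    count_of_mem z₀ hz₀, Int.toNat_of_nonneg (by positivity)⟩
  split_ifs with hzD
  · exact_mod_cast (count_of_mem z hzD).trans (count_of_mem z₀ hz₀).symm
  · rw [← count_of_notMem z hz hzD, Int.toNat_natCast]

end PartialDifferenceSet

section PowerDual

variable {G H : Type*} [AddCommGroup G] [Fintype G] [AddCommGroup H] [Fintype H]

theorem add_pow_of_mul_eq_zero {R : Type*} [CommRing R] {a b : R} (hab : a * b = 0) {t : ℕ}
    (ht : t ≠ 0) : (a + b) ^ t = a ^ t + b ^ t := by
  obtain ⟨t, rfl⟩ := Nat.exists_eq_add_one_of_ne_zero ht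
  induction t with
  | zero => simp
  | succ t ih =>
    rw [pow_succ, ih t.succ_ne_zero]
    linear_combination (a ^ t + b ^ t) * hab

theorem charSum_add (f g : G → ℂ) (ψ : AddChar G ℂ) :
    charSum (f + g) ψ = charSum f ψ + charSum g ψ := by
  simp [charSum, add_mul, Finset.sum_add_distrib]

theorem charSum_comp_addEquiv (e : G ≃+ H) (f : G → ℂ) (ψ : AddChar H ℂ) :
    charSum (f ∘ e.symm) ψ = charSum f (ψ.compAddMonoidHom e) :=
  Fintype.sum_equiv e.symm.toEquiv _ _ fun x => by
    rw [AddChar.compAddMonoidHom_apply]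
    exact congrArg (f (e.symm x) * ψ ·) (e.apply_symm_apply x).symm

theorem charSum_prod (f : G → ℂ) (g : H → ℂ) (ψ : AddChar (G × H) ℂ) :
    charSum (fun z => f z.1 * g z.2) ψ =
      charSum f (ψ.compAddMonoidHom (.inl G H)) * charSum g (ψ.compAddMonoidHom (.inr G H)) := by
  have split (z : G × H) : ψ z = ψ (z.1, 0) * ψ (0, z.2) := by
    rw [← AddChar.map_add_eq_mul, Prod.mk_add_mk, add_zero, zero_add]
  simp_rw [charSum, Finset.sum_mul_sum, Fintype.sum_prod_type]
  refine Finset.sum_congr rfl fun x _ => Finset.sum_congr rfl fun y _ => ?_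
  simp only [split (x, y), AddChar.compAddMonoidHom_apply, AddMonoidHom.inl_apply,
    AddMonoidHom.inr_apply]
  ring

/-- The Fourier transform of each power `f ^ t`, `0 < t < m`, is `w` times the `t`-th power of one
and the same function `f'` on the dual group. -/
def IsPowerDual (m : ℕ) (w : ℂ) (f : G → ℂ) (f' : AddChar G ℂ → ℂ) : Prop :=
  ∀ t, 0 < t → t < m → ∀ ψ, charSum (f ^ t) ψ = w * f' ψ ^ t

namespace IsPowerDual

variable {m : ℕ} {v w : ℂ}

theorem add {f g : G → ℂ} {f' g' : AddChar G ℂ → ℂ} (hf : IsPowerDual m w f f')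
    (hg : IsPowerDual m w g g') (hfg : f * g = 0) (hfg' : f' * g' = 0) :
    IsPowerDual m w (f + g) (f' + g') := by
  intro t ht htm ψ
  rw [add_pow_of_mul_eq_zero hfg ht.ne', charSum_add, hf t ht htm, hg t ht htm, Pi.add_apply,
    add_pow_of_mul_eq_zero (congrFun hfg' ψ) ht.ne', mul_add]

theorem prod {f : G → ℂ} {f' : AddChar G ℂ → ℂ} {g : H → ℂ} {g' : AddChar H ℂ → ℂ}
    (hf : IsPowerDual m v f f') (hg : IsPowerDual m w g g') :
    IsPowerDual m (v * w) (fun z => f z.1 * g z.2) fun ψ =>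
      f' (ψ.compAddMonoidHom (.inl G H)) * g' (ψ.compAddMonoidHom (.inr G H)) := by
  intro t ht htm ψ
  have pow : (fun z : G × H => f z.1 * g z.2) ^ t = fun z => (f ^ t) z.1 * (g ^ t) z.2 :=
    funext fun z => mul_pow _ _ t
  rw [pow, charSum_prod, hf t ht htm, hg t ht htm]
  ring

theorem prod_add_prod {f₁ f₂ : G → ℂ} {f₁' f₂' : AddChar G ℂ → ℂ} {g₁ g₂ : H → ℂ}
    {g₁' g₂' : AddChar H ℂ → ℂ} {v₁ v₂ w₁ w₂ : ℂ} (hf₁ : IsPowerDual m v₁ f₁ f₁')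
    (hg₁ : IsPowerDual m w₁ g₁ g₁') (hf₂ : IsPowerDual m v₂ f₂ f₂')
    (hg₂ : IsPowerDual m w₂ g₂ g₂') (hvw : v₁ * w₁ = v₂ * w₂) (hf : ∀ x, f₁ x * f₂ x = 0)
    (hg' : ∀ ψ, g₁' ψ * g₂' ψ = 0) :
    IsPowerDual m (v₁ * w₁) (fun z => f₁ z.1 * g₁ z.2 + f₂ z.1 * g₂ z.2) fun ψ =>
      f₁' (ψ.compAddMonoidHom (.inl G H)) * g₁' (ψ.compAddMonoidHom (.inr G H)) +
        f₂' (ψ.compAddMonoidHom (.inl G H)) * g₂' (ψ.compAddMonoidHom (.inr G H)) := by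
  refine (hf₁.prod hg₁).add (hvw ▸ hf₂.prod hg₂) ?_ ?_
  · exact funext fun z => (mul_mul_mul_comm _ _ _ _).trans (by rw [hf, zero_mul, Pi.zero_apply])
  · exact funext fun ψ => (mul_mul_mul_comm _ _ _ _).trans (by rw [hg', mul_zero, Pi.zero_apply])

theorem comp_addEquiv {f : G → ℂ} {f' : AddChar G ℂ → ℂ} (hf : IsPowerDual m w f f')
    (e : G ≃+ H) :
    IsPowerDual m w (f ∘ e.symm) fun ψ => f' (ψ.compAddMonoidHom e) :=
  fun t ht htm ψ => (charSum_comp_addEquiv e (f ^ t) ψ).trans (hf t ht htm _)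

end IsPowerDual

end PowerDual

section BuildingBlock

theorem addChar_prod_eq_zero_iff {G H : Type*} [AddCommGroup G] [AddCommGroup H]
    {ψ : AddChar (G × H) ℂ} :
    ψ = 0 ↔ ψ.compAddMonoidHom (.inr G H) = 0 ∧ ψ.compAddMonoidHom (.inl G H) = 0 := by
  refine ⟨fun h => h ▸ ⟨rfl, rfl⟩, fun ⟨hr, hl⟩ => ?_⟩
  ext ⟨x, y⟩
  have hx : ψ (x, 0) = 1 := DFunLike.congr_fun hl x
  have hy : ψ (0, y) = 1 := DFunLike.congr_fun hr y
  simpa [hx, hy] using AddChar.map_add_eq_mul ψ (x, 0) (0, y)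

/-- The possible values at one point of a quadruple of functions `a ε`, `c ε` (`ε : Bool`) of a
building block: either the point is zero (`p` holds), both `a ε` vanish and both `c ε` are `m`-th
roots of unity, or the point has a type `ε`, and then `a` and `c` are `m`-th roots of unity at `ε`
and vanish at `!ε`. -/
def IsPattern (m : ℕ) (p : Prop) (a c : Bool → ℂ) : Prop :=
  (p ∧ ∀ ε, a ε = 0 ∧ c ε ^ m = 1) ∨
    (¬p ∧ ∃ ε, a ε ^ m = 1 ∧ c ε ^ m = 1 ∧ a (!ε) = 0 ∧ c (!ε) = 0)

namespace IsPattern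

variable {m : ℕ} {p q : Prop} {a c a' c' : Bool → ℂ}

theorem mul_not_eq_zero (h : IsPattern m p a c) (ε : Bool) : a ε * c (!ε) = 0 := by
  rcases h with ⟨-, h⟩ | ⟨-, δ, -, -, ha, hc⟩
  · rw [(h ε).1, zero_mul]
  · rcases Bool.eq_or_eq_not ε δ with rfl | rfl
    · rw [hc, mul_zero]
    · rw [ha, zero_mul]

theorem mul (h : IsPattern m p a c) (h' : IsPattern m q a' c') :
    IsPattern m (p ∧ q) (fun ε => a ε * c' ε + c (!ε) * a' ε)
      (fun ε => c ε * c' ε + a (!ε) * a' ε) := by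
  rcases h' with ⟨hq, h'⟩ | ⟨hq, δ, ha', hc', ha'δ, hc'δ⟩
  · rcases h with ⟨hp, h⟩ | ⟨hp, ε, ha, hc, haε, hcε⟩
    · exact .inl ⟨⟨hp, hq⟩, fun ε => by simp [h, h', mul_pow]⟩
    · exact .inr ⟨fun hpq => hp hpq.1, ε, by simp [mul_pow, *]⟩
  · refine .inr ⟨fun hpq => hq hpq.2, δ, ?_⟩
    rcases h with ⟨-, h⟩ | ⟨-, ε, ha, hc, haε, hcε⟩
    · simp [mul_pow, *]
    · rcases Bool.eq_or_eq_not δ ε with rfl | rfl <;> simp_all [mul_pow]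

theorem add_eq_zero (h : IsPattern m p a c) (hp : p) : a true + a false = 0 := by
  obtain ⟨-, h⟩ := h.resolve_right fun h => h.1 hp
  rw [(h true).1, (h false).1, add_zero]

theorem add_pow_eq_one (h : IsPattern m p a c) (hp : ¬p) : (a true + a false) ^ m = 1 := by
  obtain ⟨-, ε, ha, -, ha', -⟩ := h.resolve_left fun h => hp h.1
  cases ε <;> simp_all

theorem mul_eq_zero (h : IsPattern m p a c) : a true * a false = 0 := by
  rcases h with ⟨-, h⟩ | ⟨-, ε, -, -, ha, -⟩
  · rw [(h true).1, zero_mul]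
  · cases ε <;> simp_all

end IsPattern

/-- A building block on a group `G` of order `u ^ 2`: functions `punctured ε` and `full ε`
(`ε : Bool`) with values in the `m`-th roots of unity together with `0`, supported on one of two
classes of nonzero elements of `G`, respectively on this class together with `0`. The Fourier
transforms of their powers have the same shape on the dual group, with the classes of `full`
swapped. -/
structure BuildingBlock (m u : ℕ) (G : Type*) [AddCommGroup G] [Fintype G] where
  punctured : Bool → G → ℂ
  full : Bool → G → ℂ
  puncturedDual : Bool → AddChar G ℂ → ℂ
  fullDual : Bool → AddChar G ℂ → ℂ
  card_eq : Fintype.card G = u ^ 2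
  isPattern : ∀ x, IsPattern m (x = 0) (punctured · x) (full · x)
  isPattern_dual : ∀ ψ, IsPattern m (ψ = 0) (puncturedDual · ψ) fun ε => fullDual (!ε) ψ
  punctured_neg : ∀ ε x, punctured ε (-x) = punctured ε x
  full_neg : ∀ ε x, full ε (-x) = full ε x
  isPowerDual_punctured : ∀ ε, IsPowerDual m (-u) (punctured ε) (puncturedDual ε)
  isPowerDual_full : ∀ ε, IsPowerDual m u (full ε) (fullDual ε)

namespace BuildingBlock

variable {m u v : ℕ} {G H : Type*} [AddCommGroup G] [Fintype G] [AddCommGroup H] [Fintype H]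

/-- The block of the trivial group, the empty product. -/
def ofSubsingleton (m : ℕ) (G : Type*) [AddCommGroup G] [Fintype G] [Subsingleton G] :
    BuildingBlock m 1 G where
  punctured _ _ := 0
  full _ _ := 1
  puncturedDual _ _ := 0
  fullDual _ _ := 1
  card_eq := by simpa using Fintype.card_eq_one_iff_nonempty_unique.2 ⟨uniqueOfSubsingleton 0⟩
  isPattern x := .inl ⟨Subsingleton.elim x 0, by simp⟩
  isPattern_dual ψ := .inl ⟨by ext x; rw [Subsingleton.elim x 0]; simp, by simp⟩
  punctured_neg _ _ := rfl
  full_neg _ _ := rfl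
  isPowerDual_punctured _ t ht _ ψ := by simp [charSum, ht.ne']
  isPowerDual_full _ t _ _ ψ := by
    have := Fintype.sum_subsingleton (ψ ·) (0 : G)
    simpa [charSum] using this

/-- Transport of a building block along a group isomorphism. -/
def congr (X : BuildingBlock m u G) (e : G ≃+ H) : BuildingBlock m u H where
  punctured ε := X.punctured ε ∘ e.symm
  full ε := X.full ε ∘ e.symm
  puncturedDual ε ψ := X.puncturedDual ε (ψ.compAddMonoidHom e)
  fullDual ε ψ := X.fullDual ε (ψ.compAddMonoidHom e)
  card_eq := (Fintype.card_congr e.symm.toEquiv).trans X.card_eq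
  isPattern x := by simpa using X.isPattern (e.symm x)
  isPattern_dual ψ := by
    have hψ : ψ.compAddMonoidHom (e : G →+ H) = 0 ↔ ψ = 0 :=
      ⟨fun h => AddChar.compAddMonoidHom_injective_left _ e.surjective h, fun h => h ▸ rfl⟩
    simpa only [hψ] using X.isPattern_dual (ψ.compAddMonoidHom e)
  punctured_neg ε x := by simp [X.punctured_neg]
  full_neg ε x := by simp [X.full_neg]
  isPowerDual_punctured ε := (X.isPowerDual_punctured ε).comp_addEquiv e
  isPowerDual_full ε := (X.isPowerDual_full ε).comp_addEquiv e

theorem punctured_mul_full_not (X : BuildingBlock m u G) (ε : Bool) (x : G) :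
    X.punctured ε x * X.full (!ε) x = 0 :=
  (X.isPattern x).mul_not_eq_zero ε

theorem puncturedDual_mul_fullDual (X : BuildingBlock m u G) (ε : Bool) (ψ : AddChar G ℂ) :
    X.puncturedDual ε ψ * X.fullDual ε ψ = 0 := by
  simpa only [Bool.not_not] using (X.isPattern_dual ψ).mul_not_eq_zero ε

/-- The product of two building blocks; a pair of nonzero elements gets the type of its second
component, while in the dual it gets the type of its first one. -/
def prod (X : BuildingBlock m u G) (Y : BuildingBlock m v H) :
    BuildingBlock m (u * v) (G × H) where
  punctured ε z := X.punctured ε z.1 * Y.full ε z.2 + X.full (!ε) z.1 * Y.punctured ε z.2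
  full ε z := X.full ε z.1 * Y.full ε z.2 + X.punctured (!ε) z.1 * Y.punctured ε z.2
  puncturedDual ε ψ :=
    X.puncturedDual ε (ψ.compAddMonoidHom (.inl G H)) * Y.fullDual ε (ψ.compAddMonoidHom (.inr G H))
      + X.fullDual (!ε) (ψ.compAddMonoidHom (.inl G H)) *
        Y.puncturedDual ε (ψ.compAddMonoidHom (.inr G H))
  fullDual ε ψ :=
    X.fullDual ε (ψ.compAddMonoidHom (.inl G H)) * Y.fullDual ε (ψ.compAddMonoidHom (.inr G H))
      + X.puncturedDual (!ε) (ψ.compAddMonoidHom (.inl G H)) *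
        Y.puncturedDual ε (ψ.compAddMonoidHom (.inr G H))
  card_eq := by rw [Fintype.card_prod, X.card_eq, Y.card_eq, mul_pow]
  isPattern z := by
    simpa only [Prod.ext_iff, Prod.fst_zero, Prod.snd_zero] using
      (X.isPattern z.1).mul (Y.isPattern z.2)
  isPattern_dual ψ := by
    rw [addChar_prod_eq_zero_iff]
    convert (Y.isPattern_dual (ψ.compAddMonoidHom (.inr G H))).mul
      (X.isPattern_dual (ψ.compAddMonoidHom (.inl G H))) using 2 with ε ε <;>
    simp only [Bool.not_not] <;> ring
  punctured_neg ε z := by simp [X.punctured_neg, Y.punctured_neg, X.full_neg, Y.full_neg]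
  full_neg ε z := by simp [X.punctured_neg, Y.punctured_neg, X.full_neg, Y.full_neg]
  isPowerDual_punctured ε := by
    have h := (X.isPowerDual_punctured ε).prod_add_prod (Y.isPowerDual_full ε)
      (X.isPowerDual_full (!ε)) (Y.isPowerDual_punctured ε) (neg_mul_comm _ _)
      (X.punctured_mul_full_not ε) fun ψ => by rw [mul_comm, Y.puncturedDual_mul_fullDual]
    simpa only [Nat.cast_mul, neg_mul] using h
  isPowerDual_full ε := by
    have h := (X.isPowerDual_full ε).prod_add_prod (Y.isPowerDual_full ε)
      (X.isPowerDual_punctured (!ε)) (Y.isPowerDual_punctured ε) (neg_mul_neg _ _).symm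
      (fun x => by simpa [mul_comm] using X.punctured_mul_full_not (!ε) x)
      fun ψ => by rw [mul_comm, Y.puncturedDual_mul_fullDual]
    simpa only [Nat.cast_mul] using h

theorem nonempty_pi {s : ℕ} {F : Fin s → Type*} [∀ i, AddCommGroup (F i)] [∀ i, Fintype (F i)]
    {u : Fin s → ℕ} (X : ∀ i, Nonempty (BuildingBlock m (u i) (F i))) :
    Nonempty (BuildingBlock m (∏ i, u i) (∀ i, F i)) := by
  induction s with
  | zero => exact ⟨ofSubsingleton m _⟩
  | succ s ih =>
    obtain ⟨X₀⟩ := X 0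
    obtain ⟨Y⟩ := ih fun i => X i.succ
    rw [Fin.prod_univ_succ]
    exact ⟨(X₀.prod Y).congr (Fin.consLinearEquiv ℕ F).toAddEquiv⟩

end BuildingBlock

end BuildingBlock

section Fusion

variable {G : Type*} [AddCommGroup G] [Fintype G] {m u : ℕ}

/-- `h` vanishes at `0` and its values elsewhere are `m`-th roots of unity. The fibres of such a
function are the connection sets of the partition. -/
def IsRootValued (m : ℕ) {A : Type*} [Zero A] (h : A → ℂ) : Prop :=
  h 0 = 0 ∧ ∀ x ≠ 0, h x ^ m = 1

theorem IsRootValued.eq_zero_iff {A : Type*} [Zero A] {h : A → ℂ} (hh : IsRootValued m h)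
    (hm : m ≠ 0) {x : A} : h x = 0 ↔ x = 0 := by
  refine ⟨fun hx => ?_, fun hx => hx ▸ hh.1⟩
  by_contra hne
  simpa [hx, hm] using hh.2 x hne

theorem IsRootValued.eq_zero_or_pow_eq_one {A : Type*} [Zero A] {h : A → ℂ}
    (hh : IsRootValued m h) (x : A) : h x = 0 ∨ h x ^ m = 1 := by
  rcases eq_or_ne x 0 with rfl | hx
  · exact .inl hh.1
  · exact .inr (hh.2 x hx)

theorem IsRootValued.exists_eq_pow_iff [NeZero m] {A : Type*} [Zero A] {h : A → ℂ}
    (hh : IsRootValued m h) {ω : ℂ} (hω : IsPrimitiveRoot ω m) {x : A} :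
    (∃ j : Fin m, h x = ω ^ (j : ℕ)) ↔ x ≠ 0 := by
  refine ⟨?_, fun hx => ?_⟩
  · rintro ⟨j, hj⟩ rfl
    exact pow_ne_zero _ (hω.ne_zero (NeZero.ne m)) (hj.symm.trans hh.1)
  · obtain ⟨i, hi, hix⟩ := hω.eq_pow_of_pow_eq_one (hh.2 x hx)
    exact ⟨⟨i, hi⟩, hix.symm⟩

theorem sum_range_inv_mul_pow {K : Type*} [Field K] {ζ z : K} (hm : m ≠ 0) (hζ : ζ ^ m = 1)
    (hz : z = 0 ∨ z ^ m = 1) :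
    ∑ t ∈ Finset.range m, (ζ⁻¹ * z) ^ t =
      m * (if z = ζ then 1 else 0) + if z = 0 then 1 else 0 := by
  have hζ0 : ζ ≠ 0 := by rintro rfl; simp [hm] at hζ
  rcases hz with rfl | hz
  · simp [hζ0.symm, zero_pow_eq, hm]
  · have hz0 : z ≠ 0 := by rintro rfl; simp [hm] at hz
    rw [if_neg hz0, add_zero]
    split_ifs with hzζ
    · simp [hzζ, hζ0]
    · have hne : ζ⁻¹ * z ≠ 1 := fun h => hzζ (inv_mul_eq_one₀ hζ0 |>.1 h).symm
      rw [geom_sum_eq hne, mul_pow, inv_pow, hζ, hz]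
      simp

theorem charSum_sum_range_inv_mul_pow {h : G → ℂ} {h' : AddChar G ℂ → ℂ}
    (hm : m ≠ 0) (hG : Fintype.card G = u ^ 2) (hdual : IsPowerDual m (-u) h h') (ζ : ℂ)
    (ψ : AddChar G ℂ) :
    charSum (fun x => ∑ t ∈ Finset.range m, (ζ⁻¹ * h x) ^ t) ψ =
      (if ψ = 0 then (u : ℂ) ^ 2 else 0) + u - u * ∑ t ∈ Finset.range m, (ζ⁻¹ * h' ψ) ^ t := by
  have swap : charSum (fun x => ∑ t ∈ Finset.range m, (ζ⁻¹ * h x) ^ t) ψ =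
      ∑ t ∈ Finset.range m, ζ⁻¹ ^ t * charSum (h ^ t) ψ := by
    simp_rw [charSum, Finset.sum_mul, Finset.mul_sum, Pi.pow_apply]
    rw [Finset.sum_comm]
    simp_rw [mul_pow, mul_assoc]
  obtain ⟨k, rfl⟩ := Nat.exists_eq_add_one_of_ne_zero hm
  rw [swap, Finset.sum_range_succ', Finset.sum_range_succ', pow_zero, pow_zero, charSum_one, hG,
    Finset.sum_congr rfl fun t ht => by
      rw [hdual (t + 1) t.succ_pos (by have := Finset.mem_range.1 ht; lia)]]
  simp_rw [mul_add, Finset.mul_sum, mul_pow]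
  push_cast
  simp only [neg_mul, mul_neg, Finset.sum_neg_distrib, mul_left_comm (u : ℂ)]
  ring

theorem natCast_mul_sum_fiber {h : G → ℂ} {h' : AddChar G ℂ → ℂ} (hm : m ≠ 0)
    (hG : Fintype.card G = u ^ 2) (hh : IsRootValued m h) (hh' : IsRootValued m h')
    (hdual : IsPowerDual m (-u) h h') {ζ : ℂ} (hζ : ζ ^ m = 1) (ψ : AddChar G ℂ) :
    (m : ℂ) * ∑ x with h x = ζ, ψ x =
      if ψ = 0 then (u : ℂ) ^ 2 - 1 else (u : ℂ) - 1 - u * m * if h' ψ = ζ then 1 else 0 := by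
  have hζ0 : ζ ≠ 0 := by rintro rfl; simp [hm] at hζ
  have single : ∑ x : G, (if x = 0 then 1 else 0) * ψ x = 1 := by simp
  have key := charSum_sum_range_inv_mul_pow hm hG hdual ζ ψ
  simp_rw [sum_range_inv_mul_pow hm hζ (hh.eq_zero_or_pow_eq_one _),
    sum_range_inv_mul_pow hm hζ (hh'.eq_zero_or_pow_eq_one ψ), charSum, add_mul,
    Finset.sum_add_distrib, mul_assoc, ← Finset.mul_sum, hh.eq_zero_iff hm,
    hh'.eq_zero_iff hm, single] at key
  simp only [ite_mul, one_mul, zero_mul, ← Finset.sum_filter] at key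
  by_cases hψ : ψ = 0
  · subst hψ
    rw [hh'.1, if_neg hζ0.symm] at key
    simp only [if_true] at key ⊢
    linear_combination key
  · simp only [if_neg hψ] at key ⊢
    linear_combination key

theorem natCast_mul_sum_preimage {h : G → ℂ} {h' : AddChar G ℂ → ℂ} (hm : m ≠ 0)
    (hG : Fintype.card G = u ^ 2) (hh : IsRootValued m h) (hh' : IsRootValued m h')
    (hdual : IsPowerDual m (-u) h h') {Z : Finset ℂ} (hZ : ∀ ζ ∈ Z, ζ ^ m = 1)
    (ψ : AddChar G ℂ) :
    (m : ℂ) * ∑ x with h x ∈ Z, ψ x =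
      if ψ = 0 then Z.card * ((u : ℂ) ^ 2 - 1)
      else Z.card * ((u : ℂ) - 1) - u * m * if h' ψ ∈ Z then 1 else 0 := by
  have fibers : ∑ x with h x ∈ Z, ψ x = ∑ ζ ∈ Z, ∑ x with h x = ζ, ψ x := by
    rw [← Finset.sum_fiberwise_of_maps_to (t := Z) (g := h) (by simp)]
    refine Finset.sum_congr rfl fun ζ hζ => Finset.sum_congr ?_ fun _ _ => rfl
    ext x
    simp +contextual [hζ]
  rw [fibers, Finset.mul_sum, Finset.sum_congr rfl fun ζ hζ =>
    natCast_mul_sum_fiber hm hG hh hh' hdual (hZ ζ hζ) ψ]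
  by_cases hψ : ψ = 0
  · simp only [if_pos hψ, Finset.sum_const, nsmul_eq_mul]
  · simp only [if_neg hψ, Finset.sum_sub_distrib, Finset.sum_const, nsmul_eq_mul,
      ← Finset.mul_sum, Finset.sum_ite_eq, mul_sub]

/-- Van Dam's fusion, in the case of negative Latin square type. -/
theorem exists_isPartialDifferenceSet_of_isPowerDual [DecidableEq G] {h : G → ℂ}
    {h' : AddChar G ℂ → ℂ} (hm : m ≠ 0) (hG : Fintype.card G = u ^ 2)
    (hh : IsRootValued m h) (hh' : IsRootValued m h')
    (hneg : ∀ x, h (-x) = h x) (hdual : IsPowerDual m (-u) h h') {Z : Finset ℂ}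
    (hZ : ∀ ζ ∈ Z, ζ ^ m = 1) {c : ℤ} (hc : 0 < c) (hcm : (m : ℤ) * c = Z.card * (u - 1)) :
    ∃ l μ : ℕ, IsPartialDifferenceSet {x | h x ∈ Z} l μ ∧
      (Finset.card {x | h x ∈ Z} : ℤ) = c * (u + 1) ∧
      (l : ℤ) = -u + c ^ 2 + 3 * c ∧ (μ : ℤ) = c ^ 2 + c := by
  have hm' : (m : ℂ) ≠ 0 := Nat.cast_ne_zero.2 hm
  have hcm' : (m : ℂ) * c = Z.card * (u - 1) := by exact_mod_cast hcm
  have hsum := natCast_mul_sum_preimage hm hG hh hh' hdual hZ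
  have hzero : (0 : G) ∉ ({x | h x ∈ Z} : Finset G) := fun h0 => by
    simpa [hh.1, hm] using hZ _ (Finset.mem_filter.1 h0).2
  have hcard : (Finset.card {x | h x ∈ Z} : ℤ) = c * (u + 1) := by
    have h0 := hsum 0
    simp only [if_true, AddChar.zero_apply, Finset.sum_const, nsmul_one] at h0
    have : (Finset.card {x | h x ∈ Z} : ℂ) = c * (u + 1) :=
      mul_left_cancel₀ hm' (by linear_combination h0 - (u + 1 : ℂ) * hcm')
    exact_mod_cast this
  have hchar (ψ : AddChar G ℂ) (hψ : ψ ≠ 0) :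
      ∑ x with h x ∈ Z, ψ x = c - u * if h' ψ ∈ Z then 1 else 0 := by
    have hsumψ := hsum ψ
    rw [if_neg hψ] at hsumψ
    exact mul_left_cancel₀ hm' (by linear_combination hsumψ - hcm')
  obtain ⟨l, μ, hD, hl, hμ⟩ := exists_isPartialDifferenceSet_of_charSum hc hG hzero
    (fun g hg => by simpa [hneg] using hg) hcard fun ψ hψ => by
      rw [hchar ψ hψ]
      split_ifs <;> simp
  exact ⟨l, μ, hD, hcard, hl, hμ⟩

end Fusion

namespace BuildingBlock

variable {m u : ℕ} {G : Type*} [AddCommGroup G] [Fintype G]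

/-- The two punctured functions together separate the nonzero points into `m` classes, the
connection sets of the partition. -/
def separating (X : BuildingBlock m u G) : G → ℂ :=
  X.punctured true + X.punctured false

/-- The power dual of `separating`. -/
def separatingDual (X : BuildingBlock m u G) : AddChar G ℂ → ℂ :=
  X.puncturedDual true + X.puncturedDual false

variable (X : BuildingBlock m u G)

theorem isRootValued_separating : IsRootValued m X.separating :=
  ⟨(X.isPattern 0).add_eq_zero rfl, fun x hx => (X.isPattern x).add_pow_eq_one hx⟩

theorem isRootValued_separatingDual : IsRootValued m X.separatingDual :=
  ⟨(X.isPattern_dual 0).add_eq_zero rfl, fun ψ hψ => (X.isPattern_dual ψ).add_pow_eq_one hψ⟩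

theorem separating_neg (x : G) : X.separating (-x) = X.separating x := by
  simp [separating, X.punctured_neg]

theorem isPowerDual_separating : IsPowerDual m (-u) X.separating X.separatingDual := by
  refine (X.isPowerDual_punctured true).add (X.isPowerDual_punctured false) ?_ ?_
  · exact funext fun x => (X.isPattern x).mul_eq_zero
  · exact funext fun ψ => (X.isPattern_dual ψ).mul_eq_zero

include X in
theorem exists_isPartialDifferenceSet_partition [DecidableEq G] [NeZero m] (hu : 1 < u) :
    ∃ D : Fin m → Finset G, (∀ j, 0 ∉ D j) ∧ (∀ j, ∀ g ∈ D j, -g ∈ D j) ∧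
      (∀ j j', j ≠ j' → Disjoint (D j) (D j')) ∧ Finset.univ.biUnion D = Finset.univ \ {0} ∧
      ∀ I : Finset (Fin m), I.Nonempty → ∀ c : ℤ, (m : ℤ) * c = I.card * (u - 1) →
        ∃ l μ : ℕ, IsPartialDifferenceSet (I.biUnion D) l μ ∧
          ((I.biUnion D).card : ℤ) = c * (u + 1) ∧
          (l : ℤ) = -u + c ^ 2 + 3 * c ∧ (μ : ℤ) = c ^ 2 + c := by
  have hm : m ≠ 0 := NeZero.ne m
  have hω := Complex.isPrimitiveRoot_exp m hm
  set ω := Complex.exp (2 * Real.pi * Complex.I / m)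
  have hω_inj : Function.Injective fun j : Fin m => ω ^ (j : ℕ) := fun i j hij =>
    Fin.ext (hω.pow_inj i.2 j.2 hij)
  have hω_pow (j : ℕ) : (ω ^ j) ^ m = 1 := by rw [pow_right_comm, hω.pow_eq_one, one_pow]
  have hsep := X.isRootValued_separating
  refine ⟨fun j => {x | X.separating x = ω ^ (j : ℕ)}, fun j h0 => ?_, fun j g hg => ?_,
    fun j j' hjj' => ?_, ?_, fun I hI c hc => ?_⟩
  · simpa [← (Finset.mem_filter.1 h0).2, hsep.1, hm] using hω_pow j
  · simpa [X.separating_neg] using hg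
  · rw [Finset.disjoint_filter]
    exact fun x _ hx hx' => hjj' (hω_inj (hx.symm.trans hx'))
  · ext x
    simpa using hsep.exists_eq_pow_iff hω
  · have hunion : (I.biUnion fun j => {x | X.separating x = ω ^ (j : ℕ)}) =
        ({x | X.separating x ∈ I.image fun j : Fin m => ω ^ (j : ℕ)} : Finset G) := by
      ext x
      simp [eq_comm]
    have hcpos : 0 < c := by
      have hu' : (0 : ℤ) < u - 1 := by lia
      have hI' : (0 : ℤ) < I.card := Nat.cast_pos.2 hI.card_pos
      exact pos_of_mul_pos_right (a := (m : ℤ)) (hc ▸ mul_pos hI' hu') (Nat.cast_nonneg m)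
    rw [hunion]
    refine exists_isPartialDifferenceSet_of_isPowerDual hm X.card_eq hsep
      X.isRootValued_separatingDual X.separating_neg X.isPowerDual_separating ?_ hcpos ?_
    · simp only [Finset.forall_mem_image]
      exact fun j _ => hω_pow j
    · rw [hc, Finset.card_image_of_injective _ hω_inj]

end BuildingBlock

section LineInvariant

variable {E V : Type*} [Field E] [AddCommGroup V] [Module E V]

/-- The vectors spanning a line on which `φ` is trivial, for `φ ≠ 0` on a plane `V`: the analogue of
the orthogonal complement. -/
def trivialSubmodule (E : Type*) {V : Type*} [Field E] [AddCommGroup V] [Module E V]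
    (φ : AddChar V ℂ) : Submodule E V where
  carrier := {x | ∀ k : E, φ (k • x) = 1}
  add_mem' hx hy k := by rw [smul_add, AddChar.map_add_eq_mul, hx k, hy k, mul_one]
  zero_mem' k := by simp
  smul_mem' c x hx k := by rw [smul_smul]; exact hx (k * c)

theorem trivialSubmodule_eq_span_singleton {φ : AddChar V ℂ} (hV : Module.finrank E V = 2)
    (hφ : φ ≠ 0) {v : V} (hv : v ≠ 0) (hφv : ∀ k : E, φ (k • v) = 1) :
    trivialSubmodule E φ = E ∙ v := by
  have : FiniteDimensional E V := Module.finite_of_finrank_eq_succ hV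
  have hne : trivialSubmodule E φ ≠ ⊤ := by
    intro h
    apply hφ
    ext x
    have hx : x ∈ trivialSubmodule E φ := h ▸ Submodule.mem_top
    simpa using hx 1
  refine (Submodule.eq_of_le_of_finrank_le ?_ ?_).symm
  · exact (Submodule.span_singleton_le_iff_mem v _).2 hφv
  · have := Submodule.finrank_lt hne
    rw [finrank_span_singleton hv]
    lia

variable [Fintype E]

theorem sum_addChar_smul (φ : AddChar V ℂ) (x : V) :
    ∑ k : E, φ (k • x) = if x ∈ trivialSubmodule E φ then (Fintype.card E : ℂ) else 0 := by
  have hmem : φ.compAddMonoidHom (LinearMap.toSpanSingleton E V x).toAddMonoidHom = 0 ↔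
      x ∈ trivialSubmodule E φ := DFunLike.ext_iff
  simp only [← hmem]
  exact AddChar.sum_eq_ite (φ.compAddMonoidHom (LinearMap.toSpanSingleton E V x).toAddMonoidHom)

theorem sum_eq_add_card_sub_one_mul {R : Type*} [CommRing R] {f : E → R} {c : R}
    (hf : ∀ k ≠ 0, f k = c) :
    ∑ k, f k = f 0 + (Fintype.card E - 1) * c := by
  rw [← Finset.add_sum_erase _ _ (Finset.mem_univ 0),
    Finset.sum_congr rfl fun k hk => hf k (Finset.ne_of_mem_erase hk)]
  simp [Fintype.card_pos]

variable [Fintype V]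

theorem sum_span_singleton {f : V → ℂ} (hf : ∀ k : E, k ≠ 0 → ∀ x, f (k • x) = f x) {v : V}
    (hv : v ≠ 0) :
    ∑ x with x ∈ (E ∙ v), f x = f 0 + (Fintype.card E - 1) * f v := by
  have image : (Finset.univ.filter fun x => x ∈ (E ∙ v)) =
      Finset.univ.image fun k : E => k • v := by
    ext x
    simp [Submodule.mem_span_singleton]
  rw [image, Finset.sum_image fun k _ l _ h => smul_left_injective E hv h,
    sum_eq_add_card_sub_one_mul fun k hk => hf k hk v, zero_smul]

/-- Summing over all dilates `φ (k • ·)` collapses the Fourier transform to the line `E ∙ v`, which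
plays the role of an orthogonal complement. -/
theorem charSum_of_smul_invariant (hV : Module.finrank E V = 2) {φ : AddChar V ℂ} (hφ : φ ≠ 0)
    {v : V} (hv : v ≠ 0) (hφv : ∀ k : E, φ (k • v) = 1) {f : V → ℂ}
    (hf : ∀ k : E, k ≠ 0 → ∀ x, f (k • x) = f x) (hsum : ∑ x, f x = Fintype.card E * f 0) :
    charSum f φ = Fintype.card E * f v := by
  have rescale (k : E) (hk : k ≠ 0) : ∑ x, f x * φ (k • x) = charSum f φ :=
    Fintype.sum_equiv (LinearEquiv.smulOfNeZero E V k hk).toEquiv _ _ fun x => by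
      simp [hf k hk]
  have direct : ∑ k : E, ∑ x, f x * φ (k • x) =
      Fintype.card E * f 0 + (Fintype.card E - 1) * charSum f φ := by
    rw [sum_eq_add_card_sub_one_mul rescale]
    simp [hsum]
  have swapped : ∑ k : E, ∑ x, f x * φ (k • x) =
      Fintype.card E * (f 0 + (Fintype.card E - 1) * f v) := by
    rw [Finset.sum_comm, ← sum_span_singleton hf hv, Finset.mul_sum, Finset.sum_filter,
      ← trivialSubmodule_eq_span_singleton hV hφ hv hφv]
    simp_rw [← Finset.mul_sum, sum_addChar_smul, mul_ite, mul_zero, mul_comm (f _)]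
  have hE : (Fintype.card E : ℂ) - 1 ≠ 0 :=
    sub_ne_zero.2 (Nat.cast_ne_one.2 Fintype.one_lt_card.ne')
  apply mul_left_cancel₀ hE
  linear_combination swapped - direct

end LineInvariant

section Stickelberger

theorem finite_of_finrank_eq_two {E V : Type*} [Field E] [Finite E] [AddCommGroup V] [Module E V]
    (hV : Module.finrank E V = 2) : Finite V :=
  have := Module.finite_of_finrank_eq_succ hV
  Module.finite_of_finite E

variable {E K : Type*} [Field E] [Fintype E] [Field K] [Algebra E K]

theorem mulChar_algebraMap_eq_one_s17 {R : Type*} [CommMonoidWithZero R]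
    (hK : Module.finrank E K = 2) {χ : MulChar K R}
    (hχ : χ ^ (Fintype.card E + 1) = 1) {e : E} (he : e ≠ 0) : χ (algebraMap E K e) = 1 := by
  have := finite_of_finrank_eq_two hK
  have := Fintype.ofFinite K
  obtain ⟨y, rfl⟩ := FiniteField.norm_surjective E K e
  have hy : IsUnit y := by
    rw [isUnit_iff_ne_zero]
    rintro rfl
    simp at he
  have hcard : Fintype.card K = Fintype.card E ^ 2 := hK ▸ Module.card_eq_pow_finrank
  have hexp : (Nat.card K - 1) / (Nat.card E - 1) = Fintype.card E + 1 := by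
    rw [Nat.card_eq_fintype_card, Nat.card_eq_fintype_card, hcard]
    exact Nat.div_eq_of_eq_mul_left (Nat.sub_pos_of_lt Fintype.one_lt_card)
      (by simpa using Nat.sq_sub_sq (Fintype.card E) 1)
  rw [FiniteField.algebraMap_norm_eq_pow, hexp, map_pow, ← MulChar.pow_apply' _ (by lia), hχ,
    MulChar.one_apply hy]

variable [Fintype K]

theorem dvd_card_sub_one_of_finrank_eq_two (hK : Module.finrank E K = 2) {d : ℕ}
    (hd : d ∣ Fintype.card E + 1) : d ∣ Fintype.card K - 1 := by
  rw [show Fintype.card K = Fintype.card E ^ 2 from hK ▸ Module.card_eq_pow_finrank]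
  exact (hd.mul_right _).trans (Nat.sq_sub_sq (Fintype.card E) 1).symm.dvd

/-- Stickelberger's evaluation of the Gauss sums whose character is trivial on `E`, normalised by
the choice of an additive character that is trivial on `E` too. -/
theorem exists_addChar_gaussSum_eq_card (hK : Module.finrank E K = 2) :
    ∃ ψ : AddChar K ℂ, ∀ χ : MulChar K ℂ, χ ≠ 1 → χ ^ (Fintype.card E + 1) = 1 →
      gaussSum χ ψ = Fintype.card E := by
  have hline : (E ∙ (1 : K)) ≠ ⊤ := by
    intro h
    have := finrank_span_singleton (K := E) (one_ne_zero (α := K))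
    rw [h, finrank_top, hK] at this
    lia
  obtain ⟨y, hy⟩ : ∃ y, y ∉ (E ∙ (1 : K)) := by simpa [Submodule.eq_top_iff'] using hline
  obtain ⟨ψ, hψ⟩ := AddChar.exists_apply_ne_zero.2
    (mt (Submodule.Quotient.mk_eq_zero (E ∙ (1 : K))).1 hy)
  refine ⟨ψ.compAddMonoidHom (E ∙ (1 : K)).mkQ.toAddMonoidHom, fun χ hχ hχ' => ?_⟩
  have key := charSum_of_smul_invariant hK (v := 1) (f := χ)
    (φ := ψ.compAddMonoidHom (E ∙ (1 : K)).mkQ.toAddMonoidHom)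
    (fun h => hψ (DFunLike.congr_fun h y)) one_ne_zero (fun k => ?_) (fun k hk x => ?_) ?_
  · simpa [charSum, gaussSum] using key
  · have : (E ∙ (1 : K)).mkQ (k • 1) = 0 := by simp
    simp [this]
  · rw [Algebra.smul_def, map_mul, mulChar_algebraMap_eq_one_s17 hK hχ' hk, one_mul]
  · simp [MulChar.sum_eq_zero_of_ne_one hχ, χ.map_nonunit not_isUnit_zero]

end Stickelberger

section HasseDavenport

variable {K R : Type*} [Field K] [CommRing R] {n : K}

/-- The lift of a multiplicative character to the quadratic extension `K(√n)` through the norm. -/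
noncomputable def normLift (n : K) (χ : MulChar K R) : MulChar (QuadraticAlgebra K n 0) R where
  toMonoidHom := χ.toMonoidHom.comp QuadraticAlgebra.norm
  map_nonunit' _ hz := χ.map_nonunit (mt QuadraticAlgebra.isUnit_iff_norm_isUnit.2 hz)

theorem normLift_apply (χ : MulChar K R) (z : QuadraticAlgebra K n 0) :
    normLift n χ z = χ z.norm := rfl

/-- The additive character `ψ ∘ Tr` of the quadratic extension `K(√n)`. -/
def traceLift (n : K) (ψ : AddChar K R) : AddChar (QuadraticAlgebra K n 0) R :=
  ψ.compAddMonoidHom QuadraticAlgebra.trace.toAddMonoidHom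

theorem traceLift_apply (ψ : AddChar K R) (z : QuadraticAlgebra K n 0) :
    traceLift n ψ z = ψ (2 * z.re) := by
  simp [traceLift, QuadraticAlgebra.trace_def]

variable [Fintype K]

theorem sum_sq_eq_sum_quadraticChar_add_one_mul (hK : ringChar K ≠ 2) (f : K → R) :
    ∑ d, f (d ^ 2) = ∑ e, ((quadraticChar K e : R) + 1) * f e := by
  rw [← Finset.sum_fiberwise Finset.univ (· ^ 2)]
  refine Finset.sum_congr rfl fun e _ => ?_
  have hcard : (quadraticChar K e : R) + 1 = (Finset.univ.filter fun d : K => d ^ 2 = e).card := by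
    have h := quadraticChar_card_sqrts hK e
    rw [Set.toFinset_ofPred] at h
    exact_mod_cast congrArg (Int.cast : ℤ → R) h.symm
  rw [hcard, Finset.sum_congr rfl fun d hd => congrArg f (Finset.mem_filter.1 hd).2,
    Finset.sum_const, nsmul_eq_mul]

theorem sum_sq_add_sum_mul_sq (hK : ringChar K ≠ 2) (hn : ¬ IsSquare n) (f : K → R) :
    ∑ d, f (d ^ 2) + ∑ d, f (n * d ^ 2) = 2 * ∑ e, f e := by
  have hn0 : n ≠ 0 := fun h => hn (h ▸ IsSquare.zero)
  have dilate (g : K → R) : ∑ e, g (n * e) = ∑ e, g e := Equiv.sum_comp (Equiv.mulLeft₀ n hn0) g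
  rw [sum_sq_eq_sum_quadraticChar_add_one_mul hK f,
    sum_sq_eq_sum_quadraticChar_add_one_mul hK (f <| n * ·), ← dilate, ← dilate f,
    ← Finset.sum_add_distrib, Finset.mul_sum]
  refine Finset.sum_congr rfl fun e _ => ?_
  rw [map_mul, quadraticChar_neg_one_iff_not_isSquare.2 hn]
  push_cast
  ring

theorem sum_mulChar_sq_sub_sq_mul (hK : ringChar K ≠ 2) (χ : MulChar K R) (ψ : AddChar K R) :
    ∑ a, ∑ b, χ (a ^ 2 - b ^ 2) * ψ (2 * a) = gaussSum χ ψ ^ 2 := by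
  have h2 : (2 : K) ≠ 0 := Ring.two_ne_zero hK
  rw [gaussSum, sq, Finset.sum_mul_sum, ← Fintype.sum_prod_type', ← Fintype.sum_prod_type']
  refine Finset.sum_nbij' (fun w => (w.1 + w.2, w.1 - w.2))
    (fun w => ((w.1 + w.2) / 2, (w.1 - w.2) / 2)) (by simp) (by simp) ?_ ?_ ?_
  · rintro ⟨a, b⟩ -
    ext <;> simp <;> field
  · rintro ⟨a, b⟩ -
    ext <;> simp <;> field
  · rintro ⟨a, b⟩ -
    rw [show a ^ 2 - b ^ 2 = (a + b) * (a - b) by ring, show 2 * a = (a + b) + (a - b) by ring,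
      map_mul, AddChar.map_add_eq_mul]
    ring

instance : Fintype (QuadraticAlgebra K n 0) :=
  Fintype.ofEquiv _ (QuadraticAlgebra.equivProd n 0).symm

/-- The Hasse–Davenport relation for quadratic extensions. The sums over the values `a² - n b²` and
`a² - b²` cancel because squares and `n` times squares together cover `K` twice. -/
theorem gaussSum_normLift [IsDomain R] (hK : ringChar K ≠ 2) (hn : ¬ IsSquare n)
    {χ : MulChar K R} (hχ : χ ≠ 1) (ψ : AddChar K R) :
    gaussSum (normLift n χ) (traceLift n ψ) = -gaussSum χ ψ ^ 2 := by
  have coordinates : gaussSum (normLift n χ) (traceLift n ψ) =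
      ∑ a, ∑ b, χ (a ^ 2 - n * b ^ 2) * ψ (2 * a) := by
    rw [gaussSum, ← Fintype.sum_prod_type']
    refine Fintype.sum_equiv (QuadraticAlgebra.equivProd n 0) _ _ fun z => ?_
    rw [normLift_apply, traceLift_apply, QuadraticAlgebra.norm_def]
    simp [QuadraticAlgebra.equivProd, sq, mul_assoc]
  rw [coordinates, ← sum_mulChar_sq_sub_sq_mul hK, eq_neg_iff_add_eq_zero,
    ← Finset.sum_add_distrib]
  refine Finset.sum_eq_zero fun a _ => ?_
  have translate : ∑ e, χ (a ^ 2 - e) = 0 :=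
    (Equiv.sum_comp (Equiv.subLeft (a ^ 2)) χ).trans (MulChar.sum_eq_zero_of_ne_one hχ)
  rw [← Finset.sum_mul, ← Finset.sum_mul, ← add_mul, add_comm,
    sum_sq_add_sum_mul_sq hK hn (χ <| a ^ 2 - ·), translate, mul_zero, zero_mul]

end HasseDavenport

section RootsOfUnity

theorem exists_sum_pow_eq_one {ι : Type*} [Fintype ι] {m : ℕ} [NeZero m] (S : Finset ι)
    (hS : S.card ≡ 1 [MOD m]) :
    ∃ c : ι → ℂ, (∀ i ∈ S, c i ^ m = 1) ∧ (∀ i ∉ S, c i = 0) ∧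
      ∀ t, 0 < t → t < m → ∑ i, c i ^ t = 1 := by
  obtain ⟨ζ, hζ⟩ := IsCyclotomicExtension.exists_isPrimitiveRoot ℂ ℂ
    (Set.mem_singleton m) (NeZero.ne m)
  refine ⟨fun i => if h : i ∈ S then ζ ^ (S.equivFin ⟨i, h⟩ : ℕ) else 0, fun i hi => ?_,
    fun i hi => dif_neg hi, fun t ht htm => ?_⟩
  · simp only [dif_pos hi]
    rw [pow_right_comm, hζ.pow_eq_one, one_pow]
  · have hζt : ζ ^ t ≠ 1 := hζ.pow_ne_one_of_pos_of_lt ht.ne' htm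
    have enumerate : ∑ i, (if h : i ∈ S then ζ ^ (S.equivFin ⟨i, h⟩ : ℕ) else 0) ^ t =
        ∑ i ∈ Finset.range S.card, (ζ ^ t) ^ i := by
      rw [← Finset.sum_subset S.subset_univ fun i _ hi => by rw [dif_neg hi, zero_pow ht.ne'],
        ← Finset.sum_coe_sort S, ← Fin.sum_univ_eq_sum_range]
      refine Fintype.sum_equiv S.equivFin _ _ fun i => ?_
      rw [dif_pos i.2, pow_right_comm]
    have periodic : (ζ ^ t) ^ S.card = ζ ^ t := by
      rw [pow_right_comm, pow_eq_pow_of_modEq hS hζ.pow_eq_one, pow_one]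
    rw [enumerate, geom_sum_eq hζt, periodic, div_self (sub_ne_zero.2 hζt)]

theorem two_mul_card_filter_eq {ι : Type*} [Fintype ι] {R : Type*} [CommRing R] [IsDomain R]
    [CharZero R] {f : ι → R} (hf : ∀ i, f i ^ 2 = 1) (hsum : ∑ i, f i = 0)
    {s : R} (hs : s ^ 2 = 1) :
    2 * (Finset.univ.filter fun i => f i = s).card = Fintype.card ι := by
  have indicator (i : ι) : 1 + s * f i = if f i = s then 2 else 0 := by
    rcases sq_eq_sq_iff_eq_or_eq_neg.1 ((hf i).trans hs.symm) with h | h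
    · rw [if_pos h, h, ← sq, hs, one_add_one_eq_two]
    · have hne : -s ≠ s := by
        rw [Ne, neg_eq_self]
        rintro rfl
        simp at hs
      rw [h, if_neg hne]
      linear_combination -hs
  have total := Finset.sum_congr rfl fun i (_ : i ∈ Finset.univ) => indicator i
  rw [Finset.sum_add_distrib, ← Finset.mul_sum, hsum, ← Finset.sum_filter,
    Finset.sum_const] at total
  simp only [Finset.sum_const, Finset.card_univ, nsmul_eq_mul, mul_one, mul_zero, add_zero] at total
  rw [mul_comm]
  exact_mod_cast total.symm

end RootsOfUnity

section Projectivization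

open scoped LinearAlgebra.Projectivization

variable {E V : Type*} [Field E] [Fintype E] [AddCommGroup V] [Module E V] [Fintype V]

theorem sum_eq_sum_projectivization [Fintype (ℙ E V)] {R : Type*} [CommRing R] {f : V → R}
    (hf : ∀ k : E, k ≠ 0 → ∀ x, f (k • x) = f x) :
    ∑ x, f x = f 0 + (Fintype.card E - 1) * ∑ p : ℙ E V, f p.rep := by
  have parametrize : ∑ w : ℙ E V × Eˣ, f w.1.rep = ∑ x ∈ Finset.univ.erase 0, f x := by
    refine Finset.sum_nbij (fun w => w.2 • w.1.rep) (fun w _ => ?_) (fun w _ w' _ h => ?_)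
      (fun x hx => ?_) fun w _ => (hf w.2 w.2.ne_zero _).symm
    · simpa [Units.smul_def] using w.1.rep_nonzero
    · have hp : w.1 = w'.1 := by
        rw [← w.1.mk_rep, ← w'.1.mk_rep, Projectivization.mk_eq_mk_iff]
        exact ⟨w.2⁻¹ * w'.2, by rw [mul_smul, inv_smul_eq_iff]; exact h.symm⟩
      refine Prod.ext hp (Units.ext (smul_left_injective E w'.1.rep_nonzero ?_))
      simpa [hp, Units.smul_def] using h
    · have hx0 : x ≠ 0 := by simpa using hx
      obtain ⟨a, ha⟩ := Projectivization.exists_smul_eq_mk_rep E x hx0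
      exact ⟨(.mk E x hx0, a⁻¹), by simp, by simp [← ha]⟩
  rw [← Finset.add_sum_erase _ _ (Finset.mem_univ 0), ← parametrize, Fintype.sum_prod_type,
    Finset.mul_sum]
  simp [Fintype.card_units, Fintype.card_pos]

theorem exists_smul_invariant_sum_pow_eq_card [Fintype (ℙ E V)] {m : ℕ} [NeZero m] {P : V → Prop}
    (hP : ∀ k : E, k ≠ 0 → ∀ x, P (k • x) ↔ P x)
    (hcard : (Finset.univ.filter fun p : ℙ E V => P p.rep).card ≡ 1 [MOD m]) :
    ∃ f : V → ℂ, f 0 = 1 ∧ (∀ x ≠ 0, P x → f x ^ m = 1) ∧ (∀ x ≠ 0, ¬P x → f x = 0) ∧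
      (∀ k : E, k ≠ 0 → ∀ x, f (k • x) = f x) ∧
      ∀ t, 0 < t → t < m → ∑ x, f x ^ t = Fintype.card E := by
  obtain ⟨c, hc, hc0, hsum⟩ := exists_sum_pow_eq_one _ hcard
  let f (x : V) : ℂ := if h : x = 0 then 1 else c (.mk E x h)
  have hf0 : f 0 = 1 := dif_pos rfl
  have hf (x : V) (hx : x ≠ 0) : f x = c (.mk E x hx) := dif_neg hx
  have hmk (x : V) (hx : x ≠ 0) : P (Projectivization.mk E x hx).rep ↔ P x := by
    obtain ⟨a, ha⟩ := Projectivization.exists_smul_eq_mk_rep E x hx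
    rw [← ha]
    exact hP a a.ne_zero x
  have hfsmul (k : E) (hk : k ≠ 0) (x : V) : f (k • x) = f x := by
    rcases eq_or_ne x 0 with rfl | hx
    · rw [smul_zero]
    · rw [hf x hx, hf _ (smul_ne_zero hk hx)]
      exact congrArg c ((Projectivization.mk_eq_mk_iff' E _ _ _ _).2 ⟨k, rfl⟩)
  refine ⟨f, hf0, fun x hx hPx => ?_, fun x hx hPx => ?_, hfsmul, fun t ht htm => ?_⟩
  · rw [hf x hx]
    exact hc _ (by simpa [hmk] using hPx)
  · rw [hf x hx]
    exact hc0 _ (by simpa [hmk] using hPx)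
  · rw [sum_eq_sum_projectivization fun k hk x => by rw [hfsmul k hk]]
    simp_rw [hf _ (Projectivization.rep_nonzero _), Projectivization.mk_rep]
    rw [hsum t ht htm, hf0]
    ring

end Projectivization

/-- The sign attached to each of the two classes of a `BuildingBlock`. -/
def classSign : Bool → ℂ
  | true => 1
  | false => -1

theorem classSign_not (ε : Bool) : classSign (!ε) = -classSign ε := by cases ε <;> simp [classSign]

theorem classSign_ne_not (ε : Bool) : classSign ε ≠ classSign (!ε) := by
  cases ε <;> norm_num [classSign]

theorem classSign_sq (ε : Bool) : classSign ε ^ 2 = 1 := by cases ε <;> simp [classSign]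

theorem exists_eq_classSign {z : ℂ} (hz : z ^ 2 = 1) : ∃ ε, z = classSign ε := by
  rcases sq_eq_one_iff.1 hz with rfl | rfl
  exacts [⟨true, rfl⟩, ⟨false, rfl⟩]

/-- What is needed for the cyclotomic classes of a quadratic extension `L / K` of finite fields to
yield a building block: a multiplicative character `θ` of order `2 * m` with pure Gauss sums, and a
line `K ∙ ω` on which the additive character `ψ` is trivial and which lies outside the kernel of
`θ ^ m`. -/
structure CyclotomicDatum (m : ℕ) (K L : Type*) [Field K] [Fintype K] [Field L] [Fintype L]
    [Algebra K L] where
  θ : MulChar L ℂ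
  ψ : AddChar L ℂ
  ω : L
  finrank_eq : Module.finrank K L = 2
  card_modEq : Fintype.card K ≡ 1 [MOD 2 * m]
  θ_pow : θ ^ (2 * m) = 1
  θ_neg : ∀ x, θ (-x) = θ x
  θ_algebraMap_pow : ∀ k : K, k ≠ 0 → θ (algebraMap K L k) ^ m = 1
  θ_ω_pow : θ ω ^ m = -1
  ψ_smul_ω : ∀ k : K, ψ (k • ω) = 1
  gaussSum_eq : ∀ j, 0 < j → j < 2 * m → gaussSum (θ ^ j) ψ = -Fintype.card K

namespace CyclotomicDatum

open scoped LinearAlgebra.Projectivization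

variable {m : ℕ} {K L : Type*} [Field K] [Fintype K] [Field L] [Fintype L] [Algebra K L]
  (X : CyclotomicDatum m K L)

include X in
theorem card_eq : Fintype.card L = Fintype.card K ^ 2 :=
  X.finrank_eq ▸ Module.card_eq_pow_finrank

theorem θ_ne_zero {x : L} (hx : x ≠ 0) : X.θ x ≠ 0 := (IsUnit.map X.θ hx.isUnit).ne_zero

theorem θ_smul_pow {k : K} (hk : k ≠ 0) (x : L) : X.θ (k • x) ^ m = X.θ x ^ m := by
  rw [Algebra.smul_def, map_mul, mul_pow, X.θ_algebraMap_pow k hk, one_mul]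

/-- A factor correcting `θ` to an `m`-th root of unity on the class of sign `-1`. -/
noncomputable def twist : Bool → ℂ
  | true => 1
  | false => X.θ X.ω

theorem twist_pow (ε : Bool) : X.twist ε ^ m = classSign ε := by
  cases ε <;> simp [twist, classSign, X.θ_ω_pow]

/-- The character `θ` restricted to the class of sign `ε`. -/
noncomputable def punctured (ε : Bool) (x : L) : ℂ :=
  if X.θ x ^ m = classSign ε then X.twist ε * X.θ x else 0

theorem punctured_zero (ε : Bool) : X.punctured ε 0 = 0 := by
  simp [punctured, X.θ.map_nonunit not_isUnit_zero]

theorem punctured_pow_eq_one {ε : Bool} {x : L} (h : X.θ x ^ m = classSign ε) :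
    X.punctured ε x ^ m = 1 := by
  rw [punctured, if_pos h, mul_pow, X.twist_pow, h, ← sq, classSign_sq]

variable [NeZero m]

theorem ω_ne_zero : X.ω ≠ 0 := by
  intro h
  have := X.θ_ω_pow
  rw [h, X.θ.map_nonunit not_isUnit_zero, zero_pow (NeZero.ne m)] at this
  simp at this

theorem θ_pow_sq {x : L} (hx : x ≠ 0) : (X.θ x ^ m) ^ 2 = 1 := by
  rw [← pow_mul, mul_comm, ← MulChar.pow_apply' _ (by simp [NeZero.ne m]), X.θ_pow,
    MulChar.one_apply hx.isUnit]

theorem ψ_ne_one : X.ψ ≠ 1 := by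
  intro h
  have hm := NeZero.pos m
  have h1 := X.gaussSum_eq 1 one_pos (by lia)
  have hK : (Fintype.card K : ℂ) ≠ 0 := Nat.cast_ne_zero.2 Fintype.card_ne_zero
  have hθ : X.θ ^ 1 ≠ 1 := by
    intro h
    have := X.θ_ω_pow
    rw [← pow_one X.θ, h, MulChar.one_apply X.ω_ne_zero.isUnit, one_pow] at this
    norm_num at this
  rw [h, gaussSum_one_right hθ, zero_eq_neg] at h1
  exact hK h1

theorem θ_pow_ne_one {j : ℕ} (hj : 0 < j) (hjm : j < 2 * m) : X.θ ^ j ≠ 1 := by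
  intro h
  have := X.gaussSum_eq j hj hjm
  rw [h, gaussSum_one_left X.ψ_ne_one, neg_inj] at this
  exact Fintype.one_lt_card.ne (Nat.cast_eq_one.1 this.symm).symm

/-- Every additive character of `L` is `x ↦ ψ (y * x)` for exactly one `y`. -/
noncomputable def mulShiftEquiv : L ≃ AddChar L ℂ :=
  .ofBijective X.ψ.mulShift <| (Fintype.bijective_iff_injective_and_card _).2
    ⟨AddChar.to_mulShift_inj_of_isPrimitive (.of_ne_one X.ψ_ne_one), AddChar.card_eq.symm⟩

theorem charSum_θ_pow {j : ℕ} (hj : 0 < j) (hjm : j < 2 * m) (y : L) :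
    charSum (X.θ · ^ j) (X.ψ.mulShift y) = -Fintype.card K * X.θ y⁻¹ ^ j := by
  have apply_pow (x : L) : (X.θ ^ j) x = X.θ x ^ j := MulChar.pow_apply' _ hj.ne' x
  rcases eq_or_ne y 0 with rfl | hy
  · have := MulChar.sum_eq_zero_of_ne_one (X.θ_pow_ne_one hj hjm)
    simp_rw [apply_pow] at this
    simp [charSum, this, X.θ.map_nonunit not_isUnit_zero, hj.ne']
  · have := gaussSum_mulShift (X.θ ^ j) X.ψ hy.isUnit.unit
    simp_rw [X.gaussSum_eq j hj hjm, gaussSum, apply_pow] at this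
    rw [← MulChar.inv_apply', MulChar.inv_apply_eq_inv', inv_pow, charSum, ← div_eq_mul_inv,
      eq_div_iff (pow_ne_zero _ (X.θ_ne_zero hy)), mul_comm]
    exact this

theorem punctured_pow (ε : Bool) (x : L) {t : ℕ} (ht : 0 < t) :
    X.punctured ε x ^ t = X.twist ε ^ t / 2 * (X.θ x ^ t + classSign ε * X.θ x ^ (t + m)) := by
  rcases eq_or_ne x 0 with rfl | hx
  · simp [punctured, X.θ.map_nonunit not_isUnit_zero, ht.ne']
  obtain ⟨δ, hδ⟩ := exists_eq_classSign (X.θ_pow_sq hx)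
  rw [punctured, hδ, pow_add, hδ]
  rcases Bool.eq_or_eq_not δ ε with rfl | rfl
  · rw [if_pos rfl, mul_pow]
    linear_combination -(X.twist δ * X.θ x) ^ t / 2 * classSign_sq δ
  · rw [if_neg (classSign_ne_not ε).symm, zero_pow ht.ne', classSign_not]
    linear_combination (X.twist ε * X.θ x) ^ t / 2 * classSign_sq ε

theorem isPowerDual_punctured (ε : Bool) : IsPowerDual m (-Fintype.card K) (X.punctured ε)
    fun φ => X.punctured ε (X.mulShiftEquiv.symm φ)⁻¹ := by
  intro t ht htm φ
  obtain ⟨y, rfl⟩ := X.mulShiftEquiv.surjective φ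
  have linear : charSum (X.punctured ε ^ t) (X.ψ.mulShift y) = X.twist ε ^ t / 2 *
      (charSum (X.θ · ^ t) (X.ψ.mulShift y) +
        classSign ε * charSum (X.θ · ^ (t + m)) (X.ψ.mulShift y)) := by
    simp only [charSum, Pi.pow_apply, X.punctured_pow ε _ ht, Finset.mul_sum,
      ← Finset.sum_add_distrib]
    exact Finset.sum_congr rfl fun x _ => by ring
  simp only [Equiv.symm_apply_apply, X.punctured_pow ε _ ht]
  refine linear.trans ?_
  rw [X.charSum_θ_pow ht (by lia), X.charSum_θ_pow (ht.trans_le (t.le_add_right m)) (by lia)]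
  ring

theorem card_filter_projectivization [Fintype (ℙ K L)] (ε : Bool) :
    (Finset.univ.filter fun p : ℙ K L => X.θ p.rep ^ m = classSign ε).card ≡ 1 [MOD m] := by
  have hsum : ∑ p : ℙ K L, X.θ p.rep ^ m = 0 := by
    have total := sum_eq_sum_projectivization (E := K) (f := (X.θ · ^ m))
      fun k hk x => X.θ_smul_pow hk x
    have hm := NeZero.pos m
    have hθ : ∑ x, X.θ x ^ m = 0 := by
      simp_rw [← MulChar.pow_apply' _ hm.ne']
      exact MulChar.sum_eq_zero_of_ne_one (X.θ_pow_ne_one hm (by lia))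
    have hK : (Fintype.card K : ℂ) - 1 ≠ 0 :=
      sub_ne_zero.2 (Nat.cast_ne_one.2 Fintype.one_lt_card.ne')
    rw [hθ, X.θ.map_nonunit not_isUnit_zero, zero_pow hm.ne', zero_add] at total
    exact (mul_eq_zero.1 total.symm).resolve_left hK
  have half := two_mul_card_filter_eq (fun p : ℙ K L => X.θ_pow_sq p.rep_nonzero) hsum
    (classSign_sq ε)
  have hcard : Fintype.card (ℙ K L) = Fintype.card K + 1 := by
    simpa using Projectivization.card_of_finrank_two K L X.finrank_eq
  have := X.card_modEq.add_right 1
  rw [← hcard, ← half] at this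
  exact Nat.ModEq.mul_left_cancel' two_ne_zero this

theorem exists_full (ε : Bool) : ∃ f : L → ℂ, f 0 = 1 ∧
    (∀ x ≠ 0, X.θ x ^ m = classSign ε → f x ^ m = 1) ∧
    (∀ x ≠ 0, X.θ x ^ m ≠ classSign ε → f x = 0) ∧
    (∀ k : K, k ≠ 0 → ∀ x, f (k • x) = f x) ∧
    ∀ t, 0 < t → t < m → ∑ x, f x ^ t = Fintype.card K := by
  have : Fintype (ℙ K L) := Fintype.ofFinite _
  exact exists_smul_invariant_sum_pow_eq_card (P := fun x => X.θ x ^ m = classSign ε)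
    (fun k hk x => by rw [X.θ_smul_pow hk]) (X.card_filter_projectivization ε)

/-- A function constant on the punctured `K`-lines of the class of sign `ε`, with Fourier transform
of the same kind. -/
noncomputable def full (ε : Bool) : L → ℂ := (X.exists_full ε).choose

theorem full_zero (ε : Bool) : X.full ε 0 = 1 := (X.exists_full ε).choose_spec.1

theorem full_pow_eq_one {ε : Bool} {x : L} (hx : x ≠ 0) (h : X.θ x ^ m = classSign ε) :
    X.full ε x ^ m = 1 := (X.exists_full ε).choose_spec.2.1 x hx h

theorem full_eq_zero {ε : Bool} {x : L} (hx : x ≠ 0) (h : X.θ x ^ m ≠ classSign ε) :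
    X.full ε x = 0 := (X.exists_full ε).choose_spec.2.2.1 x hx h

theorem full_smul (ε : Bool) {k : K} (hk : k ≠ 0) (x : L) : X.full ε (k • x) = X.full ε x :=
  (X.exists_full ε).choose_spec.2.2.2.1 k hk x

theorem sum_full_pow (ε : Bool) {t : ℕ} (ht : 0 < t) (htm : t < m) :
    ∑ x, X.full ε x ^ t = Fintype.card K := (X.exists_full ε).choose_spec.2.2.2.2 t ht htm

theorem isPowerDual_full (ε : Bool) : IsPowerDual m (Fintype.card K) (X.full ε)
    fun φ => X.full ε (X.ω * (X.mulShiftEquiv.symm φ)⁻¹) := by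
  intro t ht htm φ
  obtain ⟨y, rfl⟩ := X.mulShiftEquiv.surjective φ
  simp only [Equiv.symm_apply_apply]
  rcases eq_or_ne y 0 with rfl | hy
  · have : X.mulShiftEquiv 0 = 0 := AddChar.mulShift_zero X.ψ
    simp [this, charSum, X.sum_full_pow ε ht htm, X.full_zero]
  · refine charSum_of_smul_invariant X.finrank_eq (φ := X.mulShiftEquiv y) ?_
      (mul_ne_zero X.ω_ne_zero (inv_ne_zero hy)) (fun k => ?_)
      (fun k hk x => by rw [Pi.pow_apply, X.full_smul ε hk, Pi.pow_apply]) ?_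
    · exact AddChar.IsPrimitive.of_ne_one X.ψ_ne_one hy
    · have : y * k • (X.ω * y⁻¹) = k • X.ω := by
        rw [mul_smul_comm, mul_left_comm, mul_inv_cancel₀ hy, mul_one]
      exact (congrArg X.ψ this).trans (X.ψ_smul_ω k)
    · simp [X.sum_full_pow ε ht htm, X.full_zero]

theorem isPattern (x : L) : IsPattern m (x = 0) (X.punctured · x) (X.full · x) := by
  rcases eq_or_ne x 0 with rfl | hx
  · exact .inl ⟨rfl, fun ε => ⟨X.punctured_zero ε, by simp [X.full_zero]⟩⟩
  obtain ⟨δ, hδ⟩ := exists_eq_classSign (X.θ_pow_sq hx)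
  have hδ' : X.θ x ^ m ≠ classSign (!δ) := hδ ▸ classSign_ne_not δ
  exact .inr ⟨hx, δ, X.punctured_pow_eq_one hδ, X.full_pow_eq_one hx hδ, if_neg hδ',
    X.full_eq_zero hx hδ'⟩

theorem isPattern_mul_ω (x : L) :
    IsPattern m (x = 0) (X.punctured · x) fun ε => X.full (!ε) (X.ω * x) := by
  rcases eq_or_ne x 0 with rfl | hx
  · exact .inl ⟨rfl, fun ε => ⟨X.punctured_zero ε, by simp [X.full_zero]⟩⟩
  obtain ⟨δ, hδ⟩ := exists_eq_classSign (X.θ_pow_sq hx)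
  have hωx : X.θ (X.ω * x) ^ m = classSign (!δ) := by
    rw [map_mul, mul_pow, X.θ_ω_pow, hδ, classSign_not, neg_one_mul]
  have hne : X.ω * x ≠ 0 := mul_ne_zero X.ω_ne_zero hx
  exact .inr ⟨hx, δ, X.punctured_pow_eq_one hδ, X.full_pow_eq_one hne hωx,
    if_neg (hδ ▸ classSign_ne_not δ), X.full_eq_zero hne (hωx ▸ (classSign_ne_not (!δ)))⟩

/-- The building block of the cyclotomic classes. -/
noncomputable def buildingBlock : BuildingBlock m (Fintype.card K) L where
  punctured := X.punctured
  full := X.full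
  puncturedDual ε φ := X.punctured ε (X.mulShiftEquiv.symm φ)⁻¹
  fullDual ε φ := X.full ε (X.ω * (X.mulShiftEquiv.symm φ)⁻¹)
  card_eq := X.card_eq
  isPattern := X.isPattern
  isPattern_dual φ := by
    have : φ = 0 ↔ (X.mulShiftEquiv.symm φ)⁻¹ = 0 := by
      rw [inv_eq_zero, Equiv.symm_apply_eq]
      exact (AddChar.mulShift_zero X.ψ).symm ▸ Iff.rfl
    rw [this]
    exact X.isPattern_mul_ω _
  punctured_neg ε x := by rw [punctured, punctured, X.θ_neg]
  full_neg ε x := by rw [← neg_one_smul K x, X.full_smul ε (neg_ne_zero.2 one_ne_zero)]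
  isPowerDual_punctured := X.isPowerDual_punctured
  isPowerDual_full := X.isPowerDual_full

end CyclotomicDatum

section Construction

theorem normLift_pow {K R : Type*} [Field K] [CommRing R] {n : K} {χ : MulChar K R} {j : ℕ}
    (hj : j ≠ 0) : normLift n (χ ^ j) = normLift n χ ^ j := by
  ext z
  simp only [normLift_apply, MulChar.pow_apply' _ hj]

theorem normLift_one {K R : Type*} [Field K] [CommRing R] {n : K} :
    normLift n (1 : MulChar K R) = 1 := by
  ext z
  rw [normLift_apply, MulChar.one_apply (QuadraticAlgebra.isUnit_iff_norm_isUnit.1 z.isUnit),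
    MulChar.one_apply z.isUnit]

theorem exists_mulChar_pow_eq_neg_one {M R : Type*} [CommMonoid M] [CommRing R] [IsDomain R]
    {m : ℕ} {χ : MulChar M R} (hχ : χ ^ (2 * m) = 1) (hχ' : χ ^ m ≠ 1) : ∃ a, χ a ^ m = -1 := by
  obtain ⟨a, ha⟩ : ∃ a : Mˣ, (χ ^ m) a ≠ 1 := by
    contrapose! hχ'
    ext a
    rw [hχ', MulChar.one_apply_coe]
  rw [MulChar.pow_apply_coe] at ha
  refine ⟨a, (sq_eq_one_iff.1 ?_).resolve_left ha⟩
  rw [← pow_mul, mul_comm, ← MulChar.pow_apply_coe, hχ, MulChar.one_apply_coe]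

theorem mulChar_sq_pow_eq_one {M R : Type*} [CommMonoid M] [CommMonoidWithZero R] {m : ℕ}
    {χ : MulChar M R} (hχ : χ ^ (2 * m) = 1) {r : M} (hr : IsUnit r) : χ (r ^ 2) ^ m = 1 := by
  obtain ⟨r, rfl⟩ := hr
  rw [map_pow, ← pow_mul, ← MulChar.pow_apply_coe, hχ, MulChar.one_apply_coe]

variable {m : ℕ} [NeZero m]

theorem exists_mulChar_orderOf_not_isSquare {E K : Type*} [Field E] [Fintype E] [Field K]
    [Algebra E K] (hK : Module.finrank E K = 2) (hm : 2 * m ∣ Fintype.card E + 1) :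
    ∃ (χ : MulChar K ℂ) (n : K), orderOf χ = 2 * m ∧ ¬ IsSquare n ∧ χ (-n) ^ m = -1 := by
  have := finite_of_finrank_eq_two hK
  have := Fintype.ofFinite K
  have hm0 : 0 < m := NeZero.pos m
  obtain ⟨χ, hχ⟩ := MulChar.exists_mulChar_orderOf K (dvd_card_sub_one_of_finrank_eq_two hK hm)
    (Complex.isPrimitiveRoot_exp (2 * m) (by lia))
  have hχE : χ ^ (Fintype.card E + 1) = 1 := orderOf_dvd_iff_pow_eq_one.1 (hχ ▸ hm)
  obtain ⟨a, ha⟩ := exists_mulChar_pow_eq_neg_one (hχ ▸ pow_orderOf_eq_one χ)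
    (pow_ne_one_of_lt_orderOf hm0.ne' (by lia))
  have hχ_neg : χ (-a) = χ a := by
    have : χ (-1) = 1 := by
      simpa using mulChar_algebraMap_eq_one_s17 hK hχE (neg_ne_zero.2 one_ne_zero)
    rw [← neg_one_mul, map_mul, this, one_mul]
  refine ⟨χ, -a, hχ, ?_, by rw [neg_neg, ha]⟩
  rintro ⟨r, hr⟩
  have hr0 : r ≠ 0 := by
    rintro rfl
    rw [← hχ_neg, hr, mul_zero, χ.map_nonunit not_isUnit_zero, zero_pow hm0.ne'] at ha
    norm_num at ha
  rw [← hχ_neg, hr, ← sq, mulChar_sq_pow_eq_one (hχ ▸ pow_orderOf_eq_one χ) hr0.isUnit] at ha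
  norm_num at ha

theorem exists_cyclotomicDatum {E K : Type*} [Field E] [Fintype E] [Field K] [Fintype K]
    [Algebra E K] (hK : Module.finrank E K = 2) (hm : 2 * m ∣ Fintype.card E + 1) :
    ∃ (n : K) (_ : Fact (∀ r, r ^ 2 ≠ n + 0 * r)),
      Nonempty (CyclotomicDatum m K (QuadraticAlgebra K n 0)) := by
  have hE : Fintype.card K = Fintype.card E ^ 2 := hK ▸ Module.card_eq_pow_finrank
  obtain ⟨χ, n, hχ, hn, hχn⟩ := exists_mulChar_orderOf_not_isSquare hK hm
  have hχ1 : χ ^ (2 * m) = 1 := hχ ▸ pow_orderOf_eq_one χ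
  have hχE : χ ^ (Fintype.card E + 1) = 1 := orderOf_dvd_iff_pow_eq_one.1 (hχ ▸ hm)
  have hχ_ne {j : ℕ} (hj : 0 < j) (hjm : j < 2 * m) : χ ^ j ≠ 1 :=
    pow_ne_one_of_lt_orderOf hj.ne' (hχ ▸ hjm)
  have hchar : ringChar K ≠ 2 := fun h => hn (FiniteField.isSquare_of_char_two h _)
  obtain ⟨ψ, hψ⟩ := exists_addChar_gaussSum_eq_card hK
  have irreducible : Fact (∀ r, r ^ 2 ≠ n + 0 * r) :=
    ⟨fun r hr => hn ⟨r, by linear_combination -hr⟩⟩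
  refine ⟨n, irreducible, ⟨{
    θ := normLift n χ
    ψ := traceLift n ψ
    ω := QuadraticAlgebra.omega
    finrank_eq := QuadraticAlgebra.finrank_eq_two _ _
    card_modEq := ((Nat.modEq_iff_dvd' Fintype.card_pos).2
      (dvd_card_sub_one_of_finrank_eq_two hK hm)).symm
    θ_pow := by rw [← normLift_pow (by have := NeZero.pos m; lia), hχ1, normLift_one]
    θ_neg := fun x => by rw [normLift_apply, normLift_apply, QuadraticAlgebra.norm_neg]
    θ_algebraMap_pow := fun k hk => by
      rw [normLift_apply, QuadraticAlgebra.norm_algebraMap, mulChar_sq_pow_eq_one hχ1 hk.isUnit]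
    θ_ω_pow := by simpa [normLift_apply, QuadraticAlgebra.norm_def] using hχn
    ψ_smul_ω := fun k => by simp [traceLift_apply]
    gaussSum_eq := fun j hj hjm => ?_ }⟩⟩
  rw [← normLift_pow hj.ne', gaussSum_normLift hchar hn (hχ_ne hj hjm),
    hψ _ (hχ_ne hj hjm) (by rw [pow_right_comm, hχE, one_pow]), hE]
  push_cast
  rfl

theorem nonempty_buildingBlock {q : ℕ} (hq : IsPrimePow q) (hm : 2 * m ∣ q + 1) {F : Type*}
    [Field F] [Fintype F] (hF : Fintype.card F = q ^ 4) : Nonempty (BuildingBlock m (q ^ 2) F) := by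
  obtain ⟨p, k, hp, hk, rfl⟩ := (isPrimePow_nat_iff q).1 hq
  have : Fact p.Prime := ⟨hp⟩
  let E := GaloisField p k
  have : Fintype E := Fintype.ofFinite E
  let K := FiniteField.Extension E p 2
  have : Fintype K := Fintype.ofFinite K
  have hE : Fintype.card E = p ^ k := by
    rw [Fintype.card_eq_nat_card, GaloisField.card p k hk.ne']
  have hK : Fintype.card K = (p ^ k) ^ 2 := by
    rw [Fintype.card_eq_nat_card, FiniteField.natCard_extension, Nat.card_eq_fintype_card, hE]
  obtain ⟨n, _, ⟨X⟩⟩ := exists_cyclotomicDatum (m := m)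
    (FiniteField.finrank_extension E p 2) (hE ▸ hm)
  have hcard : Fintype.card (QuadraticAlgebra K n 0) = Fintype.card F := by
    rw [X.card_eq, hK, hF, ← pow_mul]
  exact ⟨hK ▸ X.buildingBlock.congr (FiniteField.ringEquivOfCardEq hcard).toAddEquiv⟩

end Construction

theorem stmt_17 (m s : ℕ) (hm : 0 < m) (hs : 0 < s)
    (q : Fin s → ℕ) (hq : ∀ i, IsPrimePow (q i)) (hdvd : ∀ i, 2 * m ∣ q i + 1)
    (F : Fin s → Type*) [∀ i, Field (F i)] [∀ i, Fintype (F i)]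
    (hcard : ∀ i, Fintype.card (F i) = q i ^ 4)
    (u : ℕ) (hu : u = ∏ i, q i ^ 2) :
    ∃ D : Fin m → Finset (∀ i, F i),
      (∀ j, (0 : ∀ i, F i) ∉ D j) ∧
      (∀ j, ∀ g ∈ D j, -g ∈ D j) ∧
      (∀ j j', j ≠ j' → Disjoint (D j) (D j')) ∧
      (Finset.univ.biUnion D = Finset.univ \ {0}) ∧
      (∀ I : Finset (Fin m), I.Nonempty → ∀ c : ℤ, (m : ℤ) * c = I.card * ((u : ℤ) - 1) →
        ∃ k l μ : ℕ,
          (SimpleGraph.fromRel fun a b : ∀ i, F i => a - b ∈ I.biUnion D).IsSRGWith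
            (u ^ 2) k l μ ∧
          (k : ℤ) = c * ((u : ℤ) + 1) ∧
          (l : ℤ) = -(u : ℤ) + c ^ 2 + 3 * c ∧
          (μ : ℤ) = c ^ 2 + c) := by
  have : NeZero m := ⟨hm.ne'⟩
  have one_lt (i : Fin s) : 1 < q i ^ 2 := Nat.one_lt_pow two_ne_zero (hq i).one_lt
  have one_lt_u : 1 < u := by
    simpa [hu] using Finset.prod_lt_prod_of_nonempty (fun _ _ => zero_lt_one' ℕ)
      (fun i _ => one_lt i) ⟨⟨0, hs⟩, Finset.mem_univ _⟩
  obtain ⟨X⟩ := BuildingBlock.nonempty_pi fun i => nonempty_buildingBlock (hq i) (hdvd i) (hcard i)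
  rw [← hu] at X
  obtain ⟨D, zero_notMem, neg_mem, disjoint, cover, hD⟩ :=
    X.exists_isPartialDifferenceSet_partition one_lt_u
  refine ⟨D, zero_notMem, neg_mem, disjoint, cover, fun I hI c hc => ?_⟩
  obtain ⟨l, μ, hPDS, hk, hl, hμ⟩ := hD I hI c hc
  exact ⟨_, l, μ, X.card_eq ▸ hPDS.isSRGWith hPDS.adj_iff, hk, hl, hμ⟩
end
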